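/- arXiv:1312.5473 — 2 statements merged into one kernel-verified Lean document; each statement's English description precedes it below -/
import Mathlib

section
/- Maximal inequality for subharmonic functions with small exponents: let p, q ∈ (1,∞] satisfy 1/p + 1/q < 2/d and set p∗ := p/(p−1). There exists κ = κ(d,p,q) > 0 and, for each α ∈ (0,∞), a constant C₅(α) < ∞ depending only on d, p, q, α, C_reg and C_riso, such that for every choice of edge weights ω, every x₀ ∈ V, n ≥ 1, every u : V → [0,∞) with (L_Y^ω u)(x) ≥ 0 for all x ∈ B(x₀,n), and all σ′, σ with 1/2 ≤ σ′ < σ ≤ 1: max_{x∈B(x₀,σ′n)} u(x) ≤ (C₅(α)·max{1, ‖μ^ω‖_{p,B(x₀,n)}·‖ν^ω‖_{q,B(x₀,n)}}/(σ−σ′)²)^{κ′}·‖u‖_{α,B(x₀,σn)}, where κ′ := max{1, 2p∗/α}·κ. -/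
open Finset MeasureTheory
open scoped ENNReal

noncomputable section

namespace RCM

variable {V : Type*}

/-- `μ^ω(x)`, the sum of the weights of edges incident to `x`. -/
def mu (nbr : V → Finset V) (ω : V → V → ℝ) (x : V) : ℝ := ∑ y ∈ nbr x, ω x y

/-- `ν^ω(x)`, the sum of the reciprocals of the weights of edges incident to `x`. -/
def nu (nbr : V → Finset V) (ω : V → V → ℝ) (x : V) : ℝ := ∑ y ∈ nbr x, (ω x y)⁻¹

/-- `(L_Y^ω f)(x)`. -/
def lap (nbr : V → Finset V) (ω : V → V → ℝ) (f : V → ℝ) (x : V) : ℝ :=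
  (mu nbr ω x)⁻¹ * ∑ y ∈ nbr x, ω x y * (f y - f x)

/-- space-averaged norm `‖f‖_{p,A}` for a real exponent `p`. -/
def nrm (A : Finset V) (p : ℝ) (f : V → ℝ) : ℝ :=
  ((A.card : ℝ)⁻¹ * ∑ x ∈ A, |f x| ^ p) ^ (1 / p)

/-- weighted space-averaged norm `‖f‖_{p,A,φ}` for a real exponent `p`. -/
def nrmW (A : Finset V) (p : ℝ) (φ : V → ℝ) (f : V → ℝ) : ℝ :=
  ((A.card : ℝ)⁻¹ * ∑ x ∈ A, |f x| ^ p * φ x) ^ (1 / p)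

/-- space-averaged norm `‖f‖_{p,A}` for an extended exponent `p ∈ (0,∞]`;
for `p = ∞` this is the maximum of `|f|` over `A`. -/
def nrmE (A : Finset V) (p : ℝ≥0∞) (f : V → ℝ) : ℝ :=
  if p = ⊤ then sSup ((fun x => |f x|) '' (A : Set V)) else nrm A p.toReal f

/-- weighted average `(u)_{A,π}`. -/
def wavg (A : Finset V) (π : V → ℝ) (u : V → ℝ) : ℝ :=
  (∑ x ∈ A, π x * u x) / ∑ x ∈ A, π x

open Classical in
/-- relative internal boundary `∂_B A`. -/
def relBdry (G : SimpleGraph V) (B A : Finset V) : Finset V :=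
  A.filter fun z => ∃ y ∈ B, y ∉ A ∧ G.Adj z y

open Classical in
/-- internal boundary `∂B`. -/
def intBdry (G : SimpleGraph V) (B : Finset V) : Finset V :=
  B.filter fun z => ∃ y, y ∉ B ∧ G.Adj z y

open Classical in
/-- Dirichlet sum `Σ_{x,y ∈ B, x∼y} ω(x,y) (u(x)-u(y))²`. -/
def dSum (G : SimpleGraph V) (ω : V → V → ℝ) (B : Finset V) (u : V → ℝ) : ℝ :=
  ∑ x ∈ B, ∑ y ∈ B, if G.Adj x y then ω x y * (u x - u y) ^ 2 else 0

/-- `E^ω_{η²}(u) = (1/2) Σ_{x,y} η(x)² ω(x,y) (u(y)-u(x))²`. -/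
def energySq (ω : V → V → ℝ) (η u : V → ℝ) : ℝ :=
  (1 / 2) * ∑' x, ∑' y, η x ^ 2 * ω x y * (u y - u x) ^ 2

/-- `E^{ω,η}(u) = (1/2) Σ_{x,y} min(η(x)²,η(y)²) ω(x,y) (u(y)-u(x))²`. -/
def energyMin (ω : V → V → ℝ) (η u : V → ℝ) : ℝ :=
  (1 / 2) * ∑' x, ∑' y, min (η x ^ 2) (η y ^ 2) * ω x y * (u y - u x) ^ 2

/-- `‖∇η‖_{ℓ∞(E)}`, the supremum of `|η(y)-η(x)|` over edges `{x,y}`. -/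
def gradSup (G : SimpleGraph V) (η : V → ℝ) : ℝ :=
  sSup {r : ℝ | ∃ x y, G.Adj x y ∧ r = |η y - η x|}

/-- `u` is caloric on `I × B`: `∂_t u = L_Y^ω u` on `I × B`. -/
def Caloric (nbr : V → Finset V) (ω : V → V → ℝ) (I : Set ℝ) (B : Set V)
    (u : ℝ → V → ℝ) : Prop :=
  ∀ x ∈ B, ∀ t ∈ I, HasDerivAt (fun s => u s x) (lap nbr ω (u t) x) t

/-- `u` is sub-caloric on `I × B`: `∂_t u ≤ L_Y^ω u` on `I × B`. -/
def SubCaloric (nbr : V → Finset V) (ω : V → V → ℝ) (I : Set ℝ) (B : Set V)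
    (u : ℝ → V → ℝ) : Prop :=
  ∀ x ∈ B, ∀ t ∈ I, ∃ d, HasDerivAt (fun s => u s x) d t ∧ d ≤ lap nbr ω (u t) x

/-- `u` is super-caloric on `I × B`: `∂_t u ≥ L_Y^ω u` on `I × B`. -/
def SuperCaloric (nbr : V → Finset V) (ω : V → V → ℝ) (I : Set ℝ) (B : Set V)
    (u : ℝ → V → ℝ) : Prop :=
  ∀ x ∈ B, ∀ t ∈ I, ∃ d, HasDerivAt (fun s => u s x) d t ∧ lap nbr ω (u t) x ≤ d

/-- space-time norm `‖u‖_{p,[a,b]×B,φ}`. -/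
def nrmST (a b : ℝ) (B : Finset V) (p : ℝ) (φ : V → ℝ) (u : ℝ → V → ℝ) : ℝ :=
  ((b - a)⁻¹ * ∫ t in a..b, nrmW B p φ (u t) ^ p) ^ (1 / p)

end RCM

/-!
The relative isoperimetric inequality, applied at the scale at which a finite set first fills less
than half of the ball, yields a global one, hence an `ℓ¹` Sobolev inequality; Hölder's inequality
with `ν^ω` turns this into an `ℓ²` Sobolev inequality for the weighted Dirichlet energy. Tested
against powers of `u`, a subharmonic function satisfies a Caccioppoli inequality, in which `μ^ω`
enters through Hölder's inequality. Together they give a reverse Hölder inequality which gains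
integrability at each step because `1/p + 1/q < 2/d`, and Moser iteration over shrinking balls gives
the maximal inequality for the exponent `2p∗`. For smaller exponents one interpolates and absorbs
the resulting power of the maximum, weighted by a power of the distance to the boundary.
-/

namespace RCM

variable {V : Type*}

/-! ### Powers and `ℓᵖ` norms on finite sets -/

lemma rpow_sub_rpow_le {a b s : ℝ} (ha : 0 ≤ a) (hb : 0 ≤ b) (hs : 1 ≤ s) :
    a ^ s - b ^ s ≤ s * a ^ (s - 1) * (a - b) := by
  rcases ha.eq_or_lt with rfl | ha
  · rw [Real.zero_rpow (by linarith)]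
    rcases hs.eq_or_lt with rfl | hs
    · simp
    · rw [Real.zero_rpow (by linarith)]
      linarith [Real.rpow_nonneg hb s]
  · have bernoulli : 1 + s * (b / a - 1) ≤ b ^ s / a ^ s := by
      have h := one_add_mul_self_le_rpow_one_add (s := b / a - 1)
        (by linarith [div_nonneg hb ha.le]) hs
      rwa [add_sub_cancel, Real.div_rpow hb ha.le] at h
    rw [le_div_iff₀ (Real.rpow_pos_of_pos ha s)] at bernoulli
    have hpow : a ^ s = a ^ (s - 1) * a := by rw [← Real.rpow_add_one ha.ne', sub_add_cancel]
    have hexpand : (1 + s * (b / a - 1)) * a ^ s = a ^ s + s * a ^ (s - 1) * (b - a) := by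
      rw [hpow]
      field_simp
    linarith

lemma rpow_sum_le_sum_rpow {ι : Type*} (s : Finset ι) {f : ι → ℝ} (hf : ∀ i ∈ s, 0 ≤ f i)
    {t : ℝ} (ht : 0 < t) (ht1 : t ≤ 1) : (∑ i ∈ s, f i) ^ t ≤ ∑ i ∈ s, f i ^ t := by
  classical
  induction s using Finset.induction_on with
  | empty => simp [Real.zero_rpow ht.ne']
  | insert a s ha ih =>
    rw [sum_insert ha, sum_insert ha]
    have hs : ∀ i ∈ s, 0 ≤ f i := fun i hi => hf i (mem_insert_of_mem hi)
    exact (Real.rpow_add_le_add_rpow (hf a (mem_insert_self a s)) (sum_nonneg hs)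
      ht.le ht1).trans (by gcongr; exact ih hs)

/-- The `ℓᵖ(A)` norm with respect to counting measure, for a real exponent `p`. -/
def lpNrm (A : Finset V) (p : ℝ) (f : V → ℝ) : ℝ := (∑ x ∈ A, |f x| ^ p) ^ (1 / p)

/-- The `ℓᵖ(A)` norm with respect to counting measure divided by `D`. Using one normalisation
`D = nᵈ` on all the balls `B(x₀, σn)` keeps the norms monotone in the ball. -/
def scaledNrm (D : ℝ) (A : Finset V) (p : ℝ) (f : V → ℝ) : ℝ := D ^ (-(1 / p)) * lpNrm A p f

section Norms

variable {A B : Finset V} {D p q β : ℝ} {f g : V → ℝ}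

lemma sum_abs_rpow_nonneg : 0 ≤ ∑ x ∈ A, |f x| ^ p :=
  sum_nonneg fun _ _ => Real.rpow_nonneg (abs_nonneg _) _

lemma lpNrm_nonneg : 0 ≤ lpNrm A p f := Real.rpow_nonneg sum_abs_rpow_nonneg _

lemma lpNrm_of_nonneg (hf : ∀ x ∈ A, 0 ≤ f x) : lpNrm A p f = (∑ x ∈ A, f x ^ p) ^ (1 / p) := by
  unfold lpNrm
  rw [sum_congr rfl fun x hx => by rw [abs_of_nonneg (hf x hx)]]

lemma lpNrm_mono (hp : 0 ≤ p) (hAB : A ⊆ B) (hfg : ∀ x ∈ A, |f x| ≤ |g x|) :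
    lpNrm A p f ≤ lpNrm B p g := by
  refine Real.rpow_le_rpow sum_abs_rpow_nonneg ?_ (by positivity)
  exact (sum_le_sum fun x hx => Real.rpow_le_rpow (abs_nonneg _) (hfg x hx) hp).trans
    (sum_le_sum_of_subset_of_nonneg hAB fun x _ _ => Real.rpow_nonneg (abs_nonneg _) _)

lemma abs_le_lpNrm (hp : 0 < p) {x : V} (hx : x ∈ A) : |f x| ≤ lpNrm A p f := by
  calc |f x| = lpNrm {x} p f := by
        rw [lpNrm, sum_singleton, ← Real.rpow_mul (abs_nonneg _), mul_one_div_cancel hp.ne',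
          Real.rpow_one]
    _ ≤ lpNrm A p f := lpNrm_mono hp.le (singleton_subset_iff.2 hx) fun _ _ => le_rfl

lemma lpNrm_anti (hp : 0 < p) (hpq : p ≤ q) : lpNrm A q f ≤ lpNrm A p f := by
  have hq : 0 < q := hp.trans_le hpq
  calc lpNrm A q f = ((∑ x ∈ A, |f x| ^ q) ^ (p / q)) ^ (1 / p) := by
        rw [lpNrm, ← Real.rpow_mul sum_abs_rpow_nonneg]
        congr 1
        field_simp
    _ ≤ (∑ x ∈ A, (|f x| ^ q) ^ (p / q)) ^ (1 / p) := by
        refine Real.rpow_le_rpow (Real.rpow_nonneg sum_abs_rpow_nonneg _) ?_ (by positivity)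
        exact rpow_sum_le_sum_rpow A (fun x _ => Real.rpow_nonneg (abs_nonneg _) _)
          (by positivity) (div_le_one_of_le₀ hpq hq.le)
    _ = lpNrm A p f := by
        rw [lpNrm, sum_congr rfl fun x _ => by
          rw [← Real.rpow_mul (abs_nonneg _), mul_div_cancel₀ _ hq.ne']]

lemma lpNrm_rpow (hβ : β ≠ 0) (hf : ∀ x ∈ A, 0 ≤ f x) :
    lpNrm A p (fun x => f x ^ β) = lpNrm A (p * β) f ^ β := by
  rw [lpNrm_of_nonneg fun x hx => Real.rpow_nonneg (hf x hx) β, lpNrm_of_nonneg hf,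
    ← Real.rpow_mul (sum_nonneg fun x hx => Real.rpow_nonneg (hf x hx) _),
    sum_congr rfl fun x hx => by rw [← Real.rpow_mul (hf x hx), mul_comm β]]
  congr 1
  field_simp

lemma scaledNrm_nonneg (hD : 0 ≤ D) : 0 ≤ scaledNrm D A p f :=
  mul_nonneg (Real.rpow_nonneg hD _) lpNrm_nonneg

lemma scaledNrm_mono (hD : 0 ≤ D) (hp : 0 ≤ p) (hAB : A ⊆ B) (hfg : ∀ x ∈ A, |f x| ≤ |g x|) :
    scaledNrm D A p f ≤ scaledNrm D B p g :=
  mul_le_mul_of_nonneg_left (lpNrm_mono hp hAB hfg) (Real.rpow_nonneg hD _)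

lemma scaledNrm_rpow (hD : 0 ≤ D) (hβ : β ≠ 0) (hf : ∀ x ∈ A, 0 ≤ f x) :
    scaledNrm D A p (fun x => f x ^ β) = scaledNrm D A (p * β) f ^ β := by
  rw [scaledNrm, scaledNrm, lpNrm_rpow hβ hf, Real.mul_rpow (Real.rpow_nonneg hD _) lpNrm_nonneg,
    ← Real.rpow_mul hD]
  congr 2
  field_simp

lemma scaledNrm_le_rpow_mul_nrm (hA : A.Nonempty) (hD : 0 < D) {C : ℝ} (hp : 0 < p)
    (hAC : (A.card : ℝ) ≤ C * D) : scaledNrm D A p f ≤ C ^ (1 / p) * nrm A p f := by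
  have hcard : (0 : ℝ) < A.card := by exact_mod_cast hA.card_pos
  have hC : 0 < C := pos_of_mul_pos_left (hcard.trans_le hAC) hD.le
  rw [scaledNrm, nrm, Real.rpow_neg hD.le, ← Real.inv_rpow hD.le, lpNrm,
    ← Real.mul_rpow (by positivity) sum_abs_rpow_nonneg,
    ← Real.mul_rpow hC.le (mul_nonneg (by positivity) sum_abs_rpow_nonneg)]
  refine Real.rpow_le_rpow (mul_nonneg (by positivity) sum_abs_rpow_nonneg) ?_ (by positivity)
  rw [← mul_assoc]
  refine mul_le_mul_of_nonneg_right ?_ sum_abs_rpow_nonneg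
  rwa [← div_eq_mul_inv, le_div_iff₀ hcard, inv_mul_le_iff₀ hD, mul_comm D]

lemma nrm_nonneg : 0 ≤ nrm A p f :=
  Real.rpow_nonneg (mul_nonneg (by positivity) sum_abs_rpow_nonneg) _

lemma nrm_le_nrm (hA : A.Nonempty) (hp : 0 < p) (hpq : p ≤ q) : nrm A p f ≤ nrm A q f := by
  have hq : 0 < q := hp.trans_le hpq
  have hcard : (A.card : ℝ) ≠ 0 := by exact_mod_cast hA.card_ne_zero
  have jensen := Real.rpow_arith_mean_le_arith_mean_rpow A (fun _ => (A.card : ℝ)⁻¹)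
    (fun x => |f x| ^ p) (fun _ _ => by positivity) (by simp [hcard])
    (fun _ _ => by positivity) ((one_le_div hp).2 hpq)
  simp only [← mul_sum, ← Real.rpow_mul (abs_nonneg _), mul_div_cancel₀ _ hp.ne'] at jensen
  have hmean : 0 ≤ (A.card : ℝ)⁻¹ * ∑ x ∈ A, |f x| ^ p :=
    mul_nonneg (by positivity) sum_abs_rpow_nonneg
  calc nrm A p f = (((A.card : ℝ)⁻¹ * ∑ x ∈ A, |f x| ^ p) ^ (q / p)) ^ (1 / q) := by
        rw [nrm, ← Real.rpow_mul hmean]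
        congr 1
        field_simp
    _ ≤ nrm A q f := Real.rpow_le_rpow (Real.rpow_nonneg hmean _) jensen (by positivity)

lemma nrm_le_nrmE (hA : A.Nonempty) (hp : 0 < p) {q : ℝ≥0∞} (hpq : ENNReal.ofReal p ≤ q) :
    nrm A p f ≤ nrmE A q f := by
  unfold nrmE
  split_ifs with hq
  · have hbdd : BddAbove ((fun x => |f x|) '' (A : Set V)) := (A.finite_toSet.image _).bddAbove
    have hle : ∀ x ∈ A, |f x| ≤ sSup ((fun x => |f x|) '' (A : Set V)) := fun x hx =>
      le_csSup hbdd ⟨x, hx, rfl⟩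
    obtain ⟨x, hx⟩ := hA
    have hsup := (abs_nonneg _).trans (hle x hx)
    rw [nrm, one_div,
      Real.rpow_inv_le_iff_of_pos (mul_nonneg (by positivity) sum_abs_rpow_nonneg) hsup hp,
      inv_mul_le_iff₀ (by exact_mod_cast card_pos.2 ⟨x, hx⟩), ← nsmul_eq_mul]
    exact sum_le_card_nsmul _ _ _ fun y hy => Real.rpow_le_rpow (abs_nonneg _) (hle y hy) hp.le
  · exact nrm_le_nrm hA hp ((ENNReal.ofReal_le_iff_le_toReal hq).1 hpq)

end Norms

/-! ### The isoperimetric inequality -/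

/-- `ball x r` is the closed ball `B(x, r)` for the graph distance. -/
def IsBall (G : SimpleGraph V) (ball : V → ℝ → Finset V) : Prop :=
  ∀ (x : V) (r : ℝ) (y : V), y ∈ ball x r ↔ (G.dist x y : ℝ) ≤ r

/-- Volume regularity of order `d`: balls of radius `r ≥ 1` have volume comparable to `rᵈ`. -/
def VolumeRegular (ball : V → ℝ → Finset V) (d : ℕ) (Creg : ℝ) : Prop :=
  ∀ (x : V) (r : ℝ), 1 ≤ r →
    Creg⁻¹ * r ^ d ≤ ((ball x r).card : ℝ) ∧ ((ball x r).card : ℝ) ≤ Creg * r ^ d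

/-- The relative isoperimetric inequality on balls, for sets filling less than half of a ball. -/
def RelIsoperimetric (G : SimpleGraph V) (ball : V → ℝ → Finset V) (Criso : ℝ) : Prop :=
  ∀ (x : V) (r : ℝ) (A : Finset V), 1 ≤ r → A.Nonempty → A ⊆ ball x r →
    (A.card : ℝ) < ((ball x r).card : ℝ) / 2 →
    Criso / r ≤ ((relBdry G (ball x r) A).card : ℝ) / (A.card : ℝ)

/-- The isoperimetric inequality `|∂A| ≥ c |A|^θ` for all finite sets. -/
def IsoperimetricInequality (G : SimpleGraph V) (c θ : ℝ) : Prop :=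
  ∀ A : Finset V, c * (A.card : ℝ) ^ θ ≤ ((intBdry G A).card : ℝ)

section Isoperimetry

variable {G : SimpleGraph V} {ball : V → ℝ → Finset V} {d : ℕ} {Creg Criso : ℝ}

lemma IsBall.center_mem (hball : IsBall G ball) (x : V) {r : ℝ} (hr : 0 ≤ r) : x ∈ ball x r := by
  simpa [hball x r x] using hr

lemma IsBall.mono (hball : IsBall G ball) (x : V) : Monotone (ball x) := fun r s hrs y hy =>
  (hball x s y).2 (((hball x r y).1 hy).trans hrs)

lemma VolumeRegular.one_le (hreg : VolumeRegular ball d Creg) (hCreg : 0 < Creg) (x : V) :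
    1 ≤ Creg := by
  have h := hreg x 1 le_rfl
  rw [one_pow, mul_one, mul_one] at h
  by_contra! hlt
  linarith [h.1, h.2, (one_lt_inv₀ hCreg).2 hlt]

lemma VolumeRegular.exists_card_lt (hreg : VolumeRegular ball d Creg) (hCreg : 0 < Creg)
    (hd : d ≠ 0) (x : V) (K : ℝ) : ∃ r : ℕ, 1 ≤ r ∧ K < ((ball x r).card : ℝ) := by
  obtain ⟨r, hr⟩ := exists_nat_gt (max 1 (Creg * K))
  have hr1 : (1 : ℝ) ≤ r := (le_max_left _ _).trans hr.le
  refine ⟨r, by exact_mod_cast hr1, ?_⟩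
  calc K < Creg⁻¹ * r := by
        rw [inv_mul_eq_div, lt_div_iff₀' hCreg]
        exact (le_max_right _ _).trans_lt hr
    _ ≤ Creg⁻¹ * (r : ℝ) ^ d := by
        gcongr
        exact le_self_pow₀ hr1 hd
    _ ≤ (ball x r).card := (hreg x r hr1).1

/-- The radius is the first one at which `A` has density below `1/2`; one step earlier the density
was at least `1/2`, which gives the lower bound. -/
lemma exists_radius_card_inter_ball [DecidableEq V] (hball : IsBall G ball)
    (hreg : VolumeRegular ball d Creg) (hCreg : 0 < Creg) (hd : d ≠ 0)
    {A : Finset V} {x : V} (hx : x ∈ A) :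
    ∃ r : ℕ, 1 ≤ r ∧ ((A ∩ ball x r).card : ℝ) < ((ball x r).card : ℝ) / 2 ∧
      Creg⁻¹ / 2 ^ (d + 1) * (r : ℝ) ^ d ≤ ((A ∩ ball x r).card : ℝ) := by
  classical
  have hex : ∃ r : ℕ, 1 ≤ r ∧ ((A ∩ ball x r).card : ℝ) < ((ball x r).card : ℝ) / 2 := by
    obtain ⟨r, hr1, hr⟩ := hreg.exists_card_lt hCreg hd x (2 * A.card)
    have hA : ((A ∩ ball x r).card : ℝ) ≤ A.card := by
      exact_mod_cast card_le_card inter_subset_left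
    exact ⟨r, hr1, by linarith⟩
  obtain ⟨hr1, hlt⟩ := Nat.find_spec hex
  have hmin := fun m => Nat.find_min hex (m := m)
  refine ⟨Nat.find hex, hr1, hlt, ?_⟩
  generalize Nat.find hex = r at *
  rcases hr1.eq_or_lt with rfl | hr2
  · have hone : (1 : ℝ) ≤ (A ∩ ball x (1 : ℕ)).card := by
      exact_mod_cast card_pos.2 ⟨x, mem_inter.2 ⟨hx, hball.center_mem x (by positivity)⟩⟩
    refine le_trans ?_ hone
    rw [Nat.cast_one, one_pow, mul_one]
    exact div_le_one_of_le₀ ((inv_le_one_of_one_le₀ (hreg.one_le hCreg x)).trans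
      (one_le_pow₀ (by norm_num))) (by positivity)
  · have hcast : ((r - 1 : ℕ) : ℝ) = r - 1 := by push_cast [Nat.cast_sub hr1]; ring
    have hr2' : (2 : ℝ) ≤ r := by exact_mod_cast hr2
    have hdense : ((ball x (r - 1)).card : ℝ) / 2 ≤ (A ∩ ball x (r - 1)).card := by
      have h := hmin (r - 1) (by omega)
      rw [not_and, not_lt, hcast] at h
      exact h (by omega)
    calc Creg⁻¹ / 2 ^ (d + 1) * (r : ℝ) ^ d = Creg⁻¹ * ((r : ℝ) / 2) ^ d / 2 := by
          rw [div_pow, pow_succ]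
          field_simp
      _ ≤ Creg⁻¹ * ((r : ℝ) - 1) ^ d / 2 := by
          gcongr
          linarith
      _ ≤ ((ball x (r - 1)).card : ℝ) / 2 := by
          gcongr
          exact (hreg x _ (by linarith)).1
      _ ≤ (A ∩ ball x (r - 1)).card := hdense
      _ ≤ (A ∩ ball x r).card := by
          exact_mod_cast card_le_card (inter_subset_inter_left (hball.mono x (by linarith)))

lemma relBdry_inter_subset [DecidableEq V] (A B : Finset V) :
    relBdry G B (A ∩ B) ⊆ intBdry G A ∩ B := by
  intro z hz
  simp only [relBdry, intBdry, mem_filter, mem_inter] at hz ⊢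
  obtain ⟨⟨hzA, hzB⟩, y, hyB, hyA, hzy⟩ := hz
  exact ⟨⟨hzA, y, fun hy => hyA ⟨hy, hyB⟩, hzy⟩, hzB⟩

lemma exists_radius_card_intBdry_inter_ball [DecidableEq V] (hball : IsBall G ball)
    (hreg : VolumeRegular ball d Creg) (hCreg : 0 < Creg) (hiso : RelIsoperimetric G ball Criso)
    (hCriso : 0 ≤ Criso) (hd : d ≠ 0) {A : Finset V} {x : V} (hx : x ∈ A) :
    ∃ r : ℕ, 1 ≤ r ∧ Criso * (Creg⁻¹ / 2 ^ (d + 1)) * (r : ℝ) ^ (d - 1) ≤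
      ((intBdry G A ∩ ball x r).card : ℝ) := by
  obtain ⟨r, hr1, hlt, hle⟩ := exists_radius_card_inter_ball hball hreg hCreg hd hx
  have hr1' : (1 : ℝ) ≤ r := by exact_mod_cast hr1
  have hpos : (0 : ℝ) < (A ∩ ball x r).card := lt_of_lt_of_le (by positivity) hle
  have hrel := hiso x r (A ∩ ball x r) hr1' (card_pos.1 (by exact_mod_cast hpos))
    inter_subset_right hlt
  rw [le_div_iff₀ hpos] at hrel
  refine ⟨r, hr1, ?_⟩
  calc Criso * (Creg⁻¹ / 2 ^ (d + 1)) * (r : ℝ) ^ (d - 1)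
      = Criso / r * (Creg⁻¹ / 2 ^ (d + 1) * (r : ℝ) ^ d) := by
        rw [← pow_sub_one_mul hd (r : ℝ)]
        field_simp
    _ ≤ Criso / r * (A ∩ ball x r).card := by gcongr
    _ ≤ (relBdry G (ball x r) (A ∩ ball x r)).card := hrel
    _ ≤ (intBdry G A ∩ ball x r).card := by
        exact_mod_cast card_le_card (relBdry_inter_subset A _)

lemma exists_disjoint_balls_cover [DecidableEq V] (hG : G.Connected) (hball : IsBall G ball)
    (A : Finset V) (r : V → ℕ) :
    ∃ t ⊆ A, (t : Set V).PairwiseDisjoint (fun b => ball b (r b)) ∧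
      A ⊆ t.biUnion fun b => ball b (3 * r b) := by
  obtain ⟨t, htA, hdisj, hcov⟩ := Vitali.exists_disjoint_subfamily_covering_enlargement
    (fun a => (ball a (r a) : Set V)) (A : Set V) (fun a => (r a : ℝ)) 2 (by norm_num)
    (fun a _ => by positivity) (∑ a ∈ A, (r a : ℝ))
    (fun a ha => single_le_sum (f := fun a => (r a : ℝ)) (fun i _ => by positivity) ha)
    (fun a _ => ⟨a, hball.center_mem a (by positivity)⟩)
  lift t to Finset V using A.finite_toSet.subset htA
  refine ⟨t, by exact_mod_cast htA, fun a ha b hb hab => disjoint_coe.1 (hdisj ha hb hab),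
    fun a ha => ?_⟩
  obtain ⟨b, hb, ⟨z, hza, hzb⟩, hab⟩ := hcov a ha
  have hza := (hball _ _ _).1 hza
  have hzb := (hball _ _ _).1 hzb
  have htri : (G.dist b a : ℝ) ≤ G.dist b z + G.dist a z := by
    rw [G.dist_comm (u := a)]
    exact_mod_cast hG.dist_triangle
  exact mem_biUnion.2 ⟨b, hb, (hball _ _ _).2 (by linarith)⟩

lemma sum_card_inter_le_card {ι : Type*} [DecidableEq V] {t : Finset ι} {B : ι → Finset V}
    (hdisj : (t : Set ι).PairwiseDisjoint B) (S : Finset V) :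
    ∑ b ∈ t, (S ∩ B b).card ≤ S.card := by
  classical
  rw [← card_biUnion fun a ha b hb hab =>
    (hdisj ha hb hab).mono inter_subset_right inter_subset_right]
  exact card_le_card (biUnion_subset.2 fun b _ => inter_subset_left)

lemma card_le_mul_sum_pow [DecidableEq V] (hreg : VolumeRegular ball d Creg)
    {A t : Finset V} {r : V → ℕ} (hr : ∀ b ∈ t, 1 ≤ r b)
    (hA : A ⊆ t.biUnion fun b => ball b (3 * r b)) :
    (A.card : ℝ) ≤ Creg * 3 ^ d * ∑ b ∈ t, (r b : ℝ) ^ d := by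
  calc (A.card : ℝ) ≤ ((t.biUnion fun b => ball b (3 * r b)).card : ℝ) := by
        exact_mod_cast card_le_card hA
    _ ≤ ∑ b ∈ t, ((ball b (3 * r b)).card : ℝ) := by exact_mod_cast card_biUnion_le
    _ ≤ ∑ b ∈ t, Creg * (3 * r b : ℝ) ^ d := by
        refine sum_le_sum fun b hb => (hreg b _ ?_).2
        have : (1 : ℝ) ≤ r b := by exact_mod_cast hr b hb
        linarith
    _ = Creg * 3 ^ d * ∑ b ∈ t, (r b : ℝ) ^ d := by
        simp only [mul_sum, mul_pow, mul_assoc]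

/-- The constant that `isoperimetricInequality` produces in dimension `d`. -/
def isoConst (d : ℕ) (Creg Criso : ℝ) : ℝ :=
  Criso * (Creg⁻¹ / 2 ^ (d + 1)) / (Creg * 3 ^ d) ^ (1 - 1 / (d : ℝ))

lemma isoConst_pos (hCreg : 0 < Creg) (hCriso : 0 < Criso) : 0 < isoConst d Creg Criso := by
  unfold isoConst
  positivity

/-- Around each point of `A` there is a ball carrying a boundary portion of order `r ^ (d - 1)`;
a disjoint subfamily of these balls covers `A` after enlargement. -/
theorem isoperimetricInequality (hG : G.Connected) (hball : IsBall G ball)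
    (hreg : VolumeRegular ball d Creg) (hCreg : 0 < Creg) (hiso : RelIsoperimetric G ball Criso)
    (hCriso : 0 ≤ Criso) (hd : 2 ≤ d) :
    IsoperimetricInequality G (isoConst d Creg Criso) (1 - 1 / d) := by
  classical
  intro A
  have hd' : (2 : ℝ) ≤ d := by exact_mod_cast hd
  have hθ : 0 < 1 - 1 / (d : ℝ) := by
    rw [sub_pos, div_lt_one (by positivity)]
    linarith
  have hθ1 : 1 - 1 / (d : ℝ) ≤ 1 := sub_le_self _ (by positivity)
  have hlocal := fun x (hx : x ∈ A) => exists_radius_card_intBdry_inter_ball hball hreg hCreg hiso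
    hCriso (by omega) hx
  choose! r hr1 hr using hlocal
  obtain ⟨t, htA, hdisj, hcov⟩ := exists_disjoint_balls_cover hG hball A r
  have hvol := card_le_mul_sum_pow hreg (fun b hb => hr1 b (htA hb)) hcov
  have hbdry : Criso * (Creg⁻¹ / 2 ^ (d + 1)) * ∑ b ∈ t, (r b : ℝ) ^ (d - 1) ≤
      (intBdry G A).card := by
    calc _ ≤ ∑ b ∈ t, ((intBdry G A ∩ ball b (r b)).card : ℝ) := by
          rw [mul_sum]
          exact sum_le_sum fun b hb => hr b (htA hb)
      _ ≤ (intBdry G A).card := by exact_mod_cast sum_card_inter_le_card hdisj _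
  have hpow : (∑ b ∈ t, (r b : ℝ) ^ d) ^ (1 - 1 / (d : ℝ)) ≤ ∑ b ∈ t, (r b : ℝ) ^ (d - 1) := by
    refine (rpow_sum_le_sum_rpow t (fun _ _ => by positivity) hθ hθ1).trans_eq
      (sum_congr rfl fun b _ => ?_)
    rw [← Real.rpow_natCast, ← Real.rpow_mul (by positivity), ← Real.rpow_natCast,
      Nat.cast_sub (by omega), mul_one_sub, mul_one_div_cancel (by positivity), Nat.cast_one]
  calc isoConst d Creg Criso * (A.card : ℝ) ^ (1 - 1 / (d : ℝ))
      ≤ isoConst d Creg Criso * (Creg * 3 ^ d * ∑ b ∈ t, (r b : ℝ) ^ d) ^ (1 - 1 / (d : ℝ)) := by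
        unfold isoConst
        gcongr
    _ = Criso * (Creg⁻¹ / 2 ^ (d + 1)) * (∑ b ∈ t, (r b : ℝ) ^ d) ^ (1 - 1 / (d : ℝ)) := by
        rw [isoConst, Real.mul_rpow (x := Creg * 3 ^ d) (by positivity) (by positivity),
          ← mul_assoc, div_mul_cancel₀ _ (by positivity)]
    _ ≤ _ := by
        refine le_trans ?_ hbdry
        gcongr

end Isoperimetry

/-! ### Sobolev inequalities -/

/-- The part of the total variation of `f` seen from `S`; each edge is counted from its endpoint
with the larger value. -/
def totalVariation (nbr : V → Finset V) (S : Finset V) (f : V → ℝ) : ℝ :=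
  ∑ x ∈ S, ∑ y ∈ nbr x, max (f x - f y) 0

/-- The `ℓ¹` Sobolev inequality for nonnegative functions of finite support, with exponent `1/θ`
on the left. -/
def SobolevInequality (nbr : V → Finset V) (c θ : ℝ) : Prop :=
  ∀ (S : Finset V) (f : V → ℝ), (∀ x, 0 ≤ f x) → (∀ x, x ∉ S → f x = 0) →
    c * lpNrm S (1 / θ) f ≤ totalVariation nbr S f

section Sobolev

variable {G : SimpleGraph V} {nbr : V → Finset V} {A S : Finset V} {f : V → ℝ} {c m p θ : ℝ}

lemma lpNrm_add_le (hp : 1 ≤ p) (f g : V → ℝ) :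
    lpNrm S p (fun x => f x + g x) ≤ lpNrm S p f + lpNrm S p g :=
  Real.Lp_add_le S f g hp

lemma lpNrm_ite_mem [DecidableEq V] (hAS : A ⊆ S) (hp : p ≠ 0) (hm : 0 ≤ m) :
    lpNrm S p (fun x => if x ∈ A then m else 0) = m * (A.card : ℝ) ^ (1 / p) := by
  have hsum : ∑ x ∈ S, |if x ∈ A then m else 0| ^ p = A.card * m ^ p := by
    rw [← sum_subset hAS fun x _ hx => by rw [if_neg hx, abs_zero, Real.zero_rpow hp],
      sum_congr rfl fun x hx => by rw [if_pos hx, abs_of_nonneg hm], sum_const, nsmul_eq_mul]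
  rw [lpNrm, hsum, Real.mul_rpow (by positivity) (by positivity), ← Real.rpow_mul hm,
    mul_one_div_cancel hp, Real.rpow_one, mul_comm]

lemma totalVariation_eq_add (nbr : V → Finset V) (S : Finset V) (f : V → ℝ) (m : ℝ) :
    totalVariation nbr S f = totalVariation nbr S (fun x => max (f x - m) 0) +
      totalVariation nbr S (fun x => min (f x) m) := by
  simp only [totalVariation, ← sum_add_distrib]
  refine sum_congr rfl fun x _ => sum_congr rfl fun y _ => ?_
  grind

lemma mul_card_intBdry_le_totalVariation [DecidableEq V] (hnbr : ∀ x y, y ∈ nbr x ↔ G.Adj x y)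
    (hAS : A ⊆ S) (m : ℝ) :
    m * (intBdry G A).card ≤ totalVariation nbr S fun x => if x ∈ A then m else 0 := by
  classical
  have hnonneg : ∀ x, 0 ≤ ∑ y ∈ nbr x,
      max ((if x ∈ A then m else 0) - (if y ∈ A then m else 0)) 0 :=
    fun x => sum_nonneg fun y _ => le_max_right _ _
  have hsub : intBdry G A ⊆ S := (filter_subset _ _).trans hAS
  rw [mul_comm, ← nsmul_eq_mul]
  refine (card_nsmul_le_sum _ _ _ fun x hx => ?_).trans
    (sum_le_sum_of_subset_of_nonneg hsub fun x _ _ => hnonneg x)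
  obtain ⟨hxA, y, hyA, hxy⟩ := mem_filter.1 hx
  refine le_trans ?_ (single_le_sum (fun z _ => le_max_right _ _) ((hnbr x y).2 hxy))
  simp [hxA, hyA]

lemma IsoperimetricInequality.mul_lpNrm_le_of_level (hnbr : ∀ x y, y ∈ nbr x ↔ G.Adj x y)
    (hiso : IsoperimetricInequality G c θ) (hc : 0 ≤ c) (hθ : 0 < θ) (hθ1 : θ ≤ 1) (hAS : A ⊆ S)
    (hm : 0 ≤ m) (hoff : ∀ x, x ∉ A → f x = 0) (hmin : ∀ x ∈ A, m ≤ f x)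
    (hrec : c * lpNrm S (1 / θ) (fun x => max (f x - m) 0) ≤
      totalVariation nbr S fun x => max (f x - m) 0) :
    c * lpNrm S (1 / θ) f ≤ totalVariation nbr S f := by
  classical
  have hlevel : (fun x => min (f x) m) = fun x => if x ∈ A then m else 0 := by
    ext x
    split_ifs with hx
    · exact min_eq_right (hmin x hx)
    · rw [hoff x hx, min_eq_left hm]
  have hnorm : lpNrm S (1 / θ) f ≤
      lpNrm S (1 / θ) (fun x => max (f x - m) 0) + m * (A.card : ℝ) ^ θ := by
    calc lpNrm S (1 / θ) f = lpNrm S (1 / θ) (fun x => max (f x - m) 0 + min (f x) m) := by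
          congr 1
          ext x
          grind
      _ ≤ _ := lpNrm_add_le (by rwa [le_div_iff₀ hθ, one_mul]) _ _
      _ = _ := by rw [hlevel, lpNrm_ite_mem hAS (by positivity) hm, one_div_one_div]
  calc c * lpNrm S (1 / θ) f
      ≤ c * lpNrm S (1 / θ) (fun x => max (f x - m) 0) + m * (c * (A.card : ℝ) ^ θ) := by
        rw [mul_left_comm m, ← mul_add]
        gcongr
    _ ≤ totalVariation nbr S (fun x => max (f x - m) 0) + m * (intBdry G A).card := by
        gcongr
        exact hiso A
    _ ≤ totalVariation nbr S f := by
        rw [totalVariation_eq_add nbr S f m, hlevel]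
        gcongr
        exact mul_card_intBdry_le_totalVariation hnbr hAS m

/-- Peel off the lowest positive level of `f`, which shrinks its support. -/
theorem IsoperimetricInequality.sobolevInequality (hnbr : ∀ x y, y ∈ nbr x ↔ G.Adj x y)
    (hiso : IsoperimetricInequality G c θ) (hc : 0 ≤ c) (hθ : 0 < θ) (hθ1 : θ ≤ 1) :
    SobolevInequality nbr c θ := by
  intro S f hf hfS
  induction hk : (S.filter fun x => f x ≠ 0).card using Nat.strong_induction_on
    generalizing f with
  | _ k ih =>
  subst hk
  set A := S.filter fun x => f x ≠ 0
  have hoff : ∀ x, x ∉ A → f x = 0 := fun x hx => by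
    by_contra h
    exact hx (mem_filter.2 ⟨by_contra fun h' => h (hfS x h'), h⟩)
  rcases A.eq_empty_or_nonempty with hAe | hAn
  · have hf0 : ∀ x, f x = 0 := fun x => hoff x (by simp [hAe])
    have hθ' : θ⁻¹ ≠ 0 := by positivity
    simp [lpNrm, totalVariation, hf0, Real.zero_rpow hθ', Real.zero_rpow hθ.ne']
  · obtain ⟨x₁, hx₁, hmin⟩ := A.exists_min_image f hAn
    have hm : 0 < f x₁ := (hf x₁).lt_of_ne' (mem_filter.1 hx₁).2
    set g : V → ℝ := fun x => max (f x - f x₁) 0 with hg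
    have hgoff : ∀ x, x ∉ A → g x = 0 := fun x hx => by simp [hg, hoff x hx, hm.le]
    have hfewer : (S.filter fun x => g x ≠ 0).card < A.card := by
      refine card_lt_card ⟨fun x hx => ?_, fun h => (mem_filter.1 (h hx₁)).2 (by simp [hg])⟩
      exact by_contra fun hxA => (mem_filter.1 hx).2 (hgoff x hxA)
    have hrec := ih _ hfewer g (fun x => le_max_right _ _)
      (fun x hx => hgoff x fun h => hx (filter_subset _ _ h)) rfl
    exact hiso.mul_lpNrm_le_of_level hnbr hc hθ hθ1 (filter_subset _ _) hm.le hoff hmin hrec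

end Sobolev

/-- `ω` is a family of positive symmetric edge weights for the graph with neighbourhoods `nbr`,
extended by zero to the pairs that are not edges. -/
structure IsConductance (nbr : V → Finset V) (ω : V → V → ℝ) : Prop where
  symm : ∀ x y, ω x y = ω y x
  pos : ∀ x, ∀ y ∈ nbr x, 0 < ω x y
  eq_zero : ∀ x, ∀ y ∉ nbr x, ω x y = 0

/-- The Dirichlet energy seen from `S`; an edge inside `S` is counted twice, an edge leaving `S`
once. -/
def dirichlet (nbr : V → Finset V) (ω : V → V → ℝ) (S : Finset V) (g : V → ℝ) : ℝ :=
  ∑ x ∈ S, ∑ y ∈ nbr x, ω x y * (g x - g y) ^ 2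

section WeightedSobolev

variable {nbr : V → Finset V} {ω : V → V → ℝ} {S : Finset V} {g : V → ℝ} {c q q' s θ ρ : ℝ}

lemma IsConductance.dirichlet_nonneg (hω : IsConductance nbr ω) : 0 ≤ dirichlet nbr ω S g :=
  sum_nonneg fun x _ => sum_nonneg fun y hy => mul_nonneg (hω.pos x y hy).le (sq_nonneg _)

lemma totalVariation_nonneg : 0 ≤ totalVariation nbr S g :=
  sum_nonneg fun _ _ => sum_nonneg fun _ _ => le_max_right _ _

lemma totalVariation_rpow_le (hs : 1 ≤ s) (hg : ∀ x, 0 ≤ g x) :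
    totalVariation nbr S (fun x => g x ^ s) ≤
      s * ∑ x ∈ S, ∑ y ∈ nbr x, g x ^ (s - 1) * |g x - g y| := by
  simp only [totalVariation, mul_sum]
  refine sum_le_sum fun x _ => sum_le_sum fun y _ => ?_
  have hpow := Real.rpow_nonneg (hg x) (s - 1)
  refine max_le ((rpow_sub_rpow_le (hg x) (hg y) hs).trans ?_) (by positivity)
  rw [mul_assoc]
  gcongr
  exact le_abs_self _

lemma IsConductance.sq_sum_mul_abs_sub_le (hω : IsConductance nbr ω) (w : V → ℝ) :
    (∑ x ∈ S, ∑ y ∈ nbr x, w x * |g x - g y|) ^ 2 ≤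
      (∑ x ∈ S, nu nbr ω x * w x ^ 2) * dirichlet nbr ω S g := by
  have cauchySchwarz := sum_sq_le_sum_mul_sum_of_sq_le_mul (S.sigma nbr)
    (r := fun z => w z.1 * |g z.1 - g z.2|) (f := fun z => (ω z.1 z.2)⁻¹ * w z.1 ^ 2)
    (g := fun z => ω z.1 z.2 * (g z.1 - g z.2) ^ 2)
    (fun z hz => mul_nonneg (inv_pos.2 (hω.pos _ _ (mem_sigma.1 hz).2)).le (sq_nonneg _))
    (fun z hz => mul_nonneg (hω.pos _ _ (mem_sigma.1 hz).2).le (sq_nonneg _))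
    (fun z hz => by
      have hpos := hω.pos _ _ (mem_sigma.1 hz).2
      rw [mul_pow, sq_abs, mul_mul_mul_comm, inv_mul_cancel₀ hpos.ne', one_mul])
  simpa only [nu, dirichlet, sum_sigma, ← sum_mul] using cauchySchwarz

lemma IsConductance.sq_totalVariation_rpow_le (hω : IsConductance nbr ω) (hs : 1 ≤ s)
    (hg : ∀ x, 0 ≤ g x) :
    totalVariation nbr S (fun x => g x ^ s) ^ 2 ≤
      s ^ 2 * ((∑ x ∈ S, nu nbr ω x * g x ^ (2 * (s - 1))) * dirichlet nbr ω S g) := by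
  refine (pow_le_pow_left₀ totalVariation_nonneg (totalVariation_rpow_le hs hg) 2).trans ?_
  rw [mul_pow]
  gcongr
  refine (hω.sq_sum_mul_abs_sub_le fun x => g x ^ (s - 1)).trans_eq ?_
  simp only [← Real.rpow_mul_natCast (hg _), Nat.cast_ofNat, mul_comm (2 : ℝ)]

lemma sum_mul_rpow_le_lpNrm_mul {r : ℝ} (hq : q.HolderConjugate q') (hr : r ≠ 0) {f : V → ℝ}
    (hg : ∀ x, 0 ≤ g x) :
    ∑ x ∈ S, f x * g x ^ r ≤ lpNrm S q f * lpNrm S (q' * r) g ^ r := by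
  rw [← lpNrm_rpow hr fun x _ => hg x]
  exact Real.inner_le_Lp_mul_Lq S f (fun x => g x ^ r) hq

lemma SobolevInequality.mul_lpNrm_rpow_le (hsob : SobolevInequality nbr c θ) (hs : s ≠ 0)
    (hg : ∀ x, 0 ≤ g x) (hgS : ∀ x, x ∉ S → g x = 0) :
    c * lpNrm S (1 / θ * s) g ^ s ≤ totalVariation nbr S fun x => g x ^ s := by
  rw [← lpNrm_rpow hs fun x _ => hg x]
  exact hsob S (fun x => g x ^ s) (fun x => Real.rpow_nonneg (hg x) s)
    (fun x hx => by rw [hgS x hx, Real.zero_rpow hs])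

/-- The `ℓ¹` inequality for `g ^ s` with `s = 2ρθ`, followed by Cauchy–Schwarz to bring in the
weights and by Hölder's inequality to absorb the excess power `g ^ (2 * (s - 1))`. -/
theorem SobolevInequality.sq_lpNrm_le_dirichlet (hsob : SobolevInequality nbr c θ)
    (hω : IsConductance nbr ω) (hc : 0 ≤ c) (hq : q.HolderConjugate q') (hρ : 0 < ρ)
    (hρθ : 1 / ρ = 2 * θ - 1 / q') (hg : ∀ x, 0 ≤ g x) (hgS : ∀ x, x ∉ S → g x = 0) :
    c ^ 2 * lpNrm S (2 * ρ) g ^ 2 ≤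
      (2 * ρ * θ) ^ 2 * (lpNrm S q (nu nbr ω) * dirichlet nbr ω S g) := by
  have hq' := hq.symm.pos
  have hθ : 0 < θ := by
    have h1 : 0 < 1 / ρ := by positivity
    have h2 : 0 < 1 / q' := by positivity
    linarith
  set s := 2 * ρ * θ
  set N := lpNrm S (2 * ρ) g
  have hs : s - 1 = ρ / q' := by
    have h := congrArg (ρ * ·) hρθ
    simp only [mul_one_div_cancel hρ.ne', mul_sub, mul_one_div] at h
    linarith
  have hs1 : 0 < s - 1 := hs ▸ div_pos hρ hq'
  have hN : 0 ≤ N := lpNrm_nonneg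
  rcases hN.eq_or_lt with hN | hN
  · rw [← hN, zero_pow two_ne_zero, mul_zero]
    have := hω.dirichlet_nonneg (S := S) (g := g)
    have := lpNrm_nonneg (A := S) (p := q) (f := nu nbr ω)
    positivity
  have hsobolev : c * N ^ s ≤ totalVariation nbr S fun x => g x ^ s := by
    have h := hsob.mul_lpNrm_rpow_le (s := s) (by linarith) hg hgS
    rwa [show 1 / θ * s = 2 * ρ by simp only [s]; field_simp] at h
  have hholder : ∑ x ∈ S, nu nbr ω x * g x ^ (2 * (s - 1)) ≤
      lpNrm S q (nu nbr ω) * N ^ (2 * (s - 1)) := by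
    have h := sum_mul_rpow_le_lpNrm_mul (S := S) (f := nu nbr ω) (r := 2 * (s - 1)) hq
      (by positivity) hg
    rwa [show q' * (2 * (s - 1)) = 2 * ρ by rw [hs]; field_simp] at h
  refine le_of_mul_le_mul_right ?_ (Real.rpow_pos_of_pos hN (2 * (s - 1)))
  calc c ^ 2 * N ^ 2 * N ^ (2 * (s - 1)) = (c * N ^ s) ^ 2 := by
        rw [mul_pow, ← Real.rpow_mul_natCast hN.le s 2, mul_assoc, ← Real.rpow_two N,
          ← Real.rpow_add hN]
        congr 2
        push_cast
        ring
    _ ≤ (totalVariation nbr S fun x => g x ^ s) ^ 2 := by gcongr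
    _ ≤ s ^ 2 * ((∑ x ∈ S, nu nbr ω x * g x ^ (2 * (s - 1))) * dirichlet nbr ω S g) :=
        hω.sq_totalVariation_rpow_le (by linarith) hg
    _ ≤ s ^ 2 * (lpNrm S q (nu nbr ω) * N ^ (2 * (s - 1)) * dirichlet nbr ω S g) := by
        gcongr
        exact hω.dirichlet_nonneg
    _ = s ^ 2 * (lpNrm S q (nu nbr ω) * dirichlet nbr ω S g) * N ^ (2 * (s - 1)) := by ring

end WeightedSobolev

/-! ### The Caccioppoli inequality -/

section Caccioppoli

variable {nbr : V → Finset V} {ω : V → V → ℝ} {S : Finset V} {w η : V → ℝ} {δ : ℝ}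

lemma IsConductance.nonneg (hω : IsConductance nbr ω) (x y : V) : 0 ≤ ω x y := by
  by_cases h : y ∈ nbr x
  · exact (hω.pos x y h).le
  · exact (hω.eq_zero x y h).ge

lemma IsConductance.sum_nbr_eq_sum (hω : IsConductance nbr ω) {x : V} {F : V → ℝ}
    (hF : ∀ y ∈ nbr x, y ∉ S → F y = 0) :
    ∑ y ∈ nbr x, ω x y * F y = ∑ y ∈ S, ω x y * F y :=
  sum_congr_of_eq_on_inter (fun y hy hyS => by rw [hF y hy hyS, mul_zero])
    (fun y _ hy => by rw [hω.eq_zero x y hy, zero_mul]) fun _ _ _ => rfl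

lemma IsConductance.sum_le_mu (hω : IsConductance nbr ω) (S : Finset V) (x : V) :
    ∑ y ∈ S, ω x y ≤ mu nbr ω x := by
  classical
  calc ∑ y ∈ S, ω x y = ∑ y ∈ S ∩ nbr x, ω x y :=
        (sum_subset inter_subset_left fun y hyS hy =>
          hω.eq_zero x y fun h => hy (mem_inter.2 ⟨hyS, h⟩)).symm
    _ ≤ mu nbr ω x :=
        sum_le_sum_of_subset_of_nonneg inter_subset_right fun y _ _ => hω.nonneg x y

lemma IsConductance.sum_sum_swap (hω : IsConductance nbr ω) (S : Finset V) (F : V → V → ℝ) :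
    ∑ x ∈ S, ∑ y ∈ S, ω x y * F x y = ∑ x ∈ S, ∑ y ∈ S, ω x y * F y x := by
  rw [sum_comm]
  exact sum_congr rfl fun x _ => sum_congr rfl fun y _ => by rw [hω.symm]

lemma IsConductance.dirichlet_mul_eq (hω : IsConductance nbr ω)
    (hη : ∀ x, η x ≠ 0 → x ∈ S ∧ nbr x ⊆ S) :
    dirichlet nbr ω S (fun x => η x * w x) =
      2 * ∑ x ∈ S, ∑ y ∈ S, ω x y * ((w x - w y) * (η x ^ 2 * w x)) +
        ∑ x ∈ S, ∑ y ∈ S, ω x y * (w x * w y * (η x - η y) ^ 2) := by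
  have hrestrict : dirichlet nbr ω S (fun x => η x * w x) =
      ∑ x ∈ S, ∑ y ∈ S, ω x y * (η x * w x - η y * w y) ^ 2 := by
    refine sum_congr rfl fun x _ => hω.sum_nbr_eq_sum fun y hy hyS => ?_
    have hx : η x = 0 := of_not_not fun h => hyS ((hη x h).2 hy)
    have hy : η y = 0 := of_not_not fun h => hyS (hη y h).1
    simp [hx, hy]
  rw [hrestrict, two_mul]
  nth_rewrite 2 [hω.sum_sum_swap]
  simp only [← sum_add_distrib]
  exact sum_congr rfl fun x _ => sum_congr rfl fun y _ => by ring

lemma IsConductance.sum_sum_sub_mul_nonpos (hω : IsConductance nbr ω) (hw : ∀ x, 0 ≤ w x)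
    (hη : ∀ x, η x ≠ 0 → nbr x ⊆ S) (hsub : ∀ x ∈ S, 0 ≤ ∑ y ∈ nbr x, ω x y * (w y - w x)) :
    ∑ x ∈ S, ∑ y ∈ S, ω x y * ((w x - w y) * (η x ^ 2 * w x)) ≤ 0 := by
  refine sum_nonpos fun x hx => ?_
  by_cases h : η x = 0
  · simp [h]
  · have hS : 0 ≤ ∑ y ∈ S, ω x y * (w y - w x) := by
      rw [← hω.sum_nbr_eq_sum fun y hy hyS => absurd (hη x h hy) hyS]
      exact hsub x hx
    calc ∑ y ∈ S, ω x y * ((w x - w y) * (η x ^ 2 * w x))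
        = -((η x ^ 2 * w x) * ∑ y ∈ S, ω x y * (w y - w x)) := by
          rw [mul_sum, ← sum_neg_distrib]
          exact sum_congr rfl fun y _ => by ring
      _ ≤ 0 := neg_nonpos.2 (mul_nonneg (mul_nonneg (sq_nonneg _) (hw x)) hS)

lemma IsConductance.sum_sum_mul_sq_sub_le (hω : IsConductance nbr ω)
    (hlip : ∀ x, ∀ y ∈ nbr x, |η x - η y| ≤ δ) :
    ∑ x ∈ S, ∑ y ∈ S, ω x y * (w x * w y * (η x - η y) ^ 2) ≤
      δ ^ 2 * ∑ x ∈ S, mu nbr ω x * w x ^ 2 := by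
  have hpoint : ∀ x y, ω x y * (w x * w y * (η x - η y) ^ 2) ≤
      δ ^ 2 * (ω x y * (w x ^ 2 / 2) + ω x y * (w y ^ 2 / 2)) := fun x y => by
    by_cases h : y ∈ nbr x
    · have hgrad : (η x - η y) ^ 2 ≤ δ ^ 2 :=
        sq_le_sq' (abs_le.1 (hlip x y h)).1 (abs_le.1 (hlip x y h)).2
      have hyoung : w x * w y ≤ w x ^ 2 / 2 + w y ^ 2 / 2 := by
        linarith [two_mul_le_add_sq (w x) (w y)]
      have hprod : w x * w y * (η x - η y) ^ 2 ≤ (w x ^ 2 / 2 + w y ^ 2 / 2) * δ ^ 2 := by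
        gcongr
      linarith [mul_le_mul_of_nonneg_left hprod (hω.nonneg x y)]
    · simp [hω.eq_zero x y h]
  calc ∑ x ∈ S, ∑ y ∈ S, ω x y * (w x * w y * (η x - η y) ^ 2)
      ≤ δ ^ 2 * (∑ x ∈ S, ∑ y ∈ S, ω x y * (w x ^ 2 / 2) +
          ∑ x ∈ S, ∑ y ∈ S, ω x y * (w y ^ 2 / 2)) := by
        simp only [mul_sum, ← sum_add_distrib, ← mul_add]
        simpa only [← mul_add] using sum_le_sum fun x _ => sum_le_sum fun y _ => hpoint x y
    _ = δ ^ 2 * ∑ x ∈ S, (∑ y ∈ S, ω x y) * w x ^ 2 := by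
        rw [hω.sum_sum_swap S fun x y => w y ^ 2 / 2, ← sum_add_distrib]
        congr 1
        refine sum_congr rfl fun x _ => ?_
        rw [← sum_mul]
        ring
    _ ≤ δ ^ 2 * ∑ x ∈ S, mu nbr ω x * w x ^ 2 := by
        gcongr with x
        exact hω.sum_le_mu S x

/-- The cutoff `η` is such that the sum defining the generator at any point of its support stays
inside `S`. -/
theorem IsConductance.caccioppoli (hω : IsConductance nbr ω) (hw : ∀ x, 0 ≤ w x)
    (hη : ∀ x, η x ≠ 0 → x ∈ S ∧ nbr x ⊆ S)
    (hsub : ∀ x ∈ S, 0 ≤ ∑ y ∈ nbr x, ω x y * (w y - w x))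
    (hlip : ∀ x, ∀ y ∈ nbr x, |η x - η y| ≤ δ) :
    dirichlet nbr ω S (fun x => η x * w x) ≤ δ ^ 2 * ∑ x ∈ S, mu nbr ω x * w x ^ 2 := by
  have htest := hω.sum_sum_sub_mul_nonpos hw (fun x hx => (hη x hx).2) hsub
  have hgrad := hω.sum_sum_mul_sq_sub_le (S := S) (w := w) hlip
  rw [hω.dirichlet_mul_eq hη]
  linarith

end Caccioppoli

/-! ### Reverse Hölder inequalities for subharmonic functions -/

lemma abs_dist_sub_dist_le_one {G : SimpleGraph V} (x₀ : V) {x y : V} (h : G.Adj x y) :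
    |(G.dist x₀ x : ℝ) - G.dist x₀ y| ≤ 1 := by
  have hxy : (G.dist x₀ y : ℝ) ≤ G.dist x₀ x + 1 := by
    exact_mod_cast (by have := h.diff_dist_adj (u := x₀); lia)
  have hyx : (G.dist x₀ x : ℝ) ≤ G.dist x₀ y + 1 := by
    exact_mod_cast (by have := h.symm.diff_dist_adj (u := x₀); lia)
  exact abs_sub_le_iff.2 ⟨by linarith, by linarith⟩

lemma exists_cutoff (G : SimpleGraph V) (x₀ : V) {r' r : ℝ} (hr : 2 ≤ r - r') :
    ∃ η : V → ℝ, (∀ x, 0 ≤ η x) ∧ (∀ x, η x ≠ 0 → G.dist x₀ x + 1 ≤ r) ∧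
      (∀ x, G.dist x₀ x ≤ r' → η x = 1) ∧
      ∀ x y, G.Adj x y → |η x - η y| ≤ 2 / (r - r') := by
  have hwidth : 0 < r - 1 - r' := by linarith
  let φ : V → ℝ := fun x => (r - 1 - G.dist x₀ x) / (r - 1 - r')
  refine ⟨fun x => max 0 (min 1 (φ x)), fun x => le_max_left _ _, fun x hx => ?_, fun x hx => ?_,
    fun x y hxy => ?_⟩
  · have hφ : 0 < φ x := by
      by_contra! hφ
      exact hx (max_eq_left ((min_le_right _ _).trans hφ))
    linarith [(div_pos_iff_of_pos_right hwidth).1 hφ]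
  · have hφ : 1 ≤ φ x := (one_le_div hwidth).2 (by linarith)
    simp [min_eq_left hφ]
  · calc |max 0 (min 1 (φ x)) - max 0 (min 1 (φ y))| ≤ |φ x - φ y| := by
          simpa using (abs_max_sub_max_le_max 0 (min 1 (φ x)) 0 (min 1 (φ y))).trans
            (max_le_max le_rfl (abs_min_sub_min_le_max 1 (φ x) 1 (φ y)))
      _ = |(G.dist x₀ y : ℝ) - G.dist x₀ x| / (r - 1 - r') := by
          rw [← sub_div, sub_sub_sub_cancel_left, abs_div, abs_of_pos hwidth]
      _ ≤ 1 / (r - 1 - r') := by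
          gcongr
          exact abs_dist_sub_dist_le_one x₀ hxy.symm
      _ ≤ 2 / (r - r') := by
          rw [div_le_div_iff₀ hwidth (by linarith)]
          linarith

lemma IsConductance.sum_mul_sub_nonneg_of_lap_nonneg {nbr : V → Finset V} {ω : V → V → ℝ}
    (hω : IsConductance nbr ω) {u : V → ℝ} {x : V} (h : 0 ≤ lap nbr ω u x) :
    0 ≤ ∑ y ∈ nbr x, ω x y * (u y - u x) := by
  rcases (nbr x).eq_empty_or_nonempty with hx | hx
  · simp [hx]
  · exact nonneg_of_mul_nonneg_right h (inv_pos.2 (sum_pos (hω.pos x) hx))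

lemma IsConductance.sum_mul_rpow_sub_nonneg {nbr : V → Finset V} {ω : V → V → ℝ}
    (hω : IsConductance nbr ω) {u : V → ℝ} (hu : ∀ x, 0 ≤ u x) {x : V}
    (h : 0 ≤ ∑ y ∈ nbr x, ω x y * (u y - u x)) {β : ℝ} (hβ : 1 ≤ β) :
    0 ≤ ∑ y ∈ nbr x, ω x y * (u y ^ β - u x ^ β) := by
  have hpow := Real.rpow_nonneg (hu x) (β - 1)
  calc 0 ≤ β * u x ^ (β - 1) * ∑ y ∈ nbr x, ω x y * (u y - u x) := by positivity
    _ ≤ ∑ y ∈ nbr x, ω x y * (u y ^ β - u x ^ β) := by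
      rw [mul_sum]
      refine sum_le_sum fun y hy => ?_
      linarith [mul_le_mul_of_nonneg_left (rpow_sub_rpow_le (hu x) (hu y) hβ) (hω.pos x y hy).le]

lemma sq_scaledNrm {D p : ℝ} {A : Finset V} {f : V → ℝ} (hD : 0 ≤ D) :
    scaledNrm D A (2 * p) f ^ 2 = D ^ (-(1 / p)) * lpNrm A (2 * p) f ^ 2 := by
  rw [scaledNrm, mul_pow, ← Real.rpow_mul_natCast hD]
  congr 2
  push_cast
  field_simp

/-- The family `B` of nested finite sets, indexed by a relative radius, satisfies reverse Hölder
inequalities for all powers of `u`: passing from `B s` to the smaller `B s'` improves the exponent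
by the factor `γ`. -/
def ReverseHolder (B : ℝ → Finset V) (u : V → ℝ) (D A γ r : ℝ) : Prop :=
  ∀ β, 1 ≤ β → ∀ s' s, s' < s → s ≤ 1 →
    scaledNrm D (B s') (γ * (r * β)) u ≤
      (A / (s - s') ^ 2) ^ (1 / (2 * β)) * scaledNrm D (B s) (r * β) u

section ReverseHolder

variable {G : SimpleGraph V} {nbr : V → Finset V} {ω : V → V → ℝ} {ball : V → ℝ → Finset V}
  {S S' : Finset V} {w η u : V → ℝ} {c p p' q q' θ ρ δ D M n s s' : ℝ} {x₀ : V} {d : ℕ}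

lemma SobolevInequality.sq_scaledNrm_cutoff_le (hsob : SobolevInequality nbr c θ)
    (hω : IsConductance nbr ω) (hc : 0 ≤ c) (hp : p.HolderConjugate p')
    (hq : q.HolderConjugate q') (hρ : 0 < ρ) (hρθ : 1 / ρ = 2 * θ - 1 / q') (hD : 0 < D)
    (hw : ∀ x, 0 ≤ w x) (hη₀ : ∀ x, 0 ≤ η x) (hη : ∀ x, η x ≠ 0 → x ∈ S ∧ nbr x ⊆ S)
    (hsub : ∀ x ∈ S, 0 ≤ ∑ y ∈ nbr x, ω x y * (w y - w x))
    (hlip : ∀ x, ∀ y ∈ nbr x, |η x - η y| ≤ δ) :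
    c ^ 2 * scaledNrm D S (2 * ρ) (fun x => η x * w x) ^ 2 ≤
      (2 * ρ * θ) ^ 2 * (δ ^ 2 * D ^ (2 * (1 - θ))) *
        (scaledNrm D S p (mu nbr ω) * scaledNrm D S q (nu nbr ω)) *
          scaledNrm D S (2 * p') w ^ 2 := by
  have hcutoff : ∀ x, x ∉ S → η x * w x = 0 := fun x hx => by
    rw [of_not_not fun h => hx (hη x h).1, zero_mul]
  have hμ : ∑ x ∈ S, mu nbr ω x * w x ^ 2 ≤
      lpNrm S p (mu nbr ω) * lpNrm S (2 * p') w ^ 2 := by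
    simpa only [Real.rpow_two, mul_comm p'] using
      sum_mul_rpow_le_lpNrm_mul (S := S) (f := mu nbr ω) hp two_ne_zero hw
  have henergy := hsob.sq_lpNrm_le_dirichlet hω hc hq hρ hρθ
    (fun x => mul_nonneg (hη₀ x) (hw x)) hcutoff
  have hscaling : D ^ (-(1 / ρ)) =
      D ^ (2 * (1 - θ)) * (D ^ (-(1 / p)) * D ^ (-(1 / q))) * D ^ (-(1 / p')) := by
    simp only [← Real.rpow_add hD]
    congr 1
    linarith [hp.one_div_add_one_div, hq.one_div_add_one_div]
  calc c ^ 2 * scaledNrm D S (2 * ρ) (fun x => η x * w x) ^ 2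
      = D ^ (-(1 / ρ)) * (c ^ 2 * lpNrm S (2 * ρ) (fun x => η x * w x) ^ 2) := by
        rw [sq_scaledNrm hD.le]
        ring
    _ ≤ D ^ (-(1 / ρ)) * ((2 * ρ * θ) ^ 2 * (lpNrm S q (nu nbr ω) *
          (δ ^ 2 * (lpNrm S p (mu nbr ω) * lpNrm S (2 * p') w ^ 2)))) := by
        refine mul_le_mul_of_nonneg_left (henergy.trans ?_) (Real.rpow_nonneg hD.le _)
        gcongr
        · exact lpNrm_nonneg
        · exact (hω.caccioppoli hw hη hsub hlip).trans (by gcongr)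
    _ = _ := by
        rw [hscaling, sq_scaledNrm hD.le, scaledNrm, scaledNrm]
        ring

/-- On small scales the reverse Hölder inequality is just the inclusion of `ℓᵖ` spaces. -/
lemma sq_scaledNrm_le_of_small_scale (hD : 1 ≤ D) (hp : p.HolderConjugate p')
    (hq : q.HolderConjugate q') (hρθ : 1 / ρ = 2 * θ - 1 / q') (hρ : p' ≤ ρ) (hS : S' ⊆ S) :
    scaledNrm D S' (2 * ρ) w ^ 2 ≤ D ^ (2 * (1 - θ)) * scaledNrm D S (2 * p') w ^ 2 := by
  have hp' := hp.symm.pos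
  have hD₀ : 0 < D := by linarith
  have hlp : lpNrm S' (2 * ρ) w ≤ lpNrm S (2 * p') w :=
    (lpNrm_anti (by positivity) (by linarith)).trans
      (lpNrm_mono (by positivity) hS fun _ _ => le_rfl)
  have hexp : D ^ (-(1 / ρ)) ≤ D ^ (2 * (1 - θ)) * D ^ (-(1 / p')) := by
    rw [← Real.rpow_add hD₀]
    refine Real.rpow_le_rpow_of_exponent_le hD ?_
    linarith [hp.one_div_add_one_div, hq.one_div_add_one_div, hp.one_div_pos, hq.one_div_pos]
  calc scaledNrm D S' (2 * ρ) w ^ 2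
      ≤ D ^ (2 * (1 - θ)) * D ^ (-(1 / p')) * lpNrm S (2 * p') w ^ 2 := by
        rw [sq_scaledNrm hD₀.le]
        gcongr
        exact lpNrm_nonneg
    _ = D ^ (2 * (1 - θ)) * scaledNrm D S (2 * p') w ^ 2 := by
        rw [sq_scaledNrm hD₀.le]
        ring

lemma rpow_two_mul_one_sub_eq_sq (hn : 0 ≤ n) (hd : d ≠ 0) :
    (n ^ d) ^ (2 * (1 - (1 - 1 / (d : ℝ)))) = n ^ 2 := by
  rw [← Real.rpow_natCast_mul hn, ← Real.rpow_two]
  congr 1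
  field_simp
  ring

lemma SobolevInequality.sq_scaledNrm_le_of_large_scale
    (hsob : SobolevInequality nbr c (1 - 1 / d))
    (hnbr : ∀ x y, y ∈ nbr x ↔ G.Adj x y) (hball : IsBall G ball) (hω : IsConductance nbr ω)
    (hd : d ≠ 0) (hc : 0 ≤ c) (hp : p.HolderConjugate p') (hq : q.HolderConjugate q')
    (hρ : 0 < ρ) (hρθ : 1 / ρ = 2 * (1 - 1 / (d : ℝ)) - 1 / q') (hn : 0 < n)
    (hμν : scaledNrm (n ^ d) (ball x₀ n) p (mu nbr ω) *
      scaledNrm (n ^ d) (ball x₀ n) q (nu nbr ω) ≤ M)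
    (hw : ∀ x, 0 ≤ w x) (hsub : ∀ x ∈ ball x₀ n, 0 ≤ ∑ y ∈ nbr x, ω x y * (w y - w x))
    (hlarge : 2 ≤ (s - s') * n) (hs : s ≤ 1) :
    c ^ 2 * scaledNrm (n ^ d) (ball x₀ (s' * n)) (2 * ρ) w ^ 2 ≤
      4 * (2 * ρ * (1 - 1 / d)) ^ 2 * M / (s - s') ^ 2 *
        scaledNrm (n ^ d) (ball x₀ (s * n)) (2 * p') w ^ 2 := by
  have hD : 0 < n ^ d := by positivity
  have hδ : 0 < s - s' := pos_of_mul_pos_left (by linarith) hn.le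
  have hball_sub : ball x₀ (s * n) ⊆ ball x₀ n :=
    hball.mono x₀ (mul_le_of_le_one_left hn.le hs)
  obtain ⟨η, hη₀, hηsupp, hη₁, hηlip⟩ := exists_cutoff G x₀ (r' := s' * n) (r := s * n)
    (by linarith)
  have hsupp : ∀ x, η x ≠ 0 → x ∈ ball x₀ (s * n) ∧ nbr x ⊆ ball x₀ (s * n) := fun x hx => by
    have hdist := hηsupp x hx
    refine ⟨(hball _ _ _).2 (by linarith), fun y hy => (hball _ _ _).2 ?_⟩
    linarith [(abs_sub_le_iff.1 (abs_dist_sub_dist_le_one x₀ ((hnbr x y).1 hy))).2]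
  have hcutoff : scaledNrm (n ^ d) (ball x₀ (s' * n)) (2 * ρ) w ≤
      scaledNrm (n ^ d) (ball x₀ (s * n)) (2 * ρ) fun x => η x * w x :=
    scaledNrm_mono hD.le (by positivity) (hball.mono x₀ (by linarith)) fun x hx => by
      rw [hη₁ x ((hball _ _ _).1 hx), one_mul]
  have henergy := hsob.sq_scaledNrm_cutoff_le hω hc hp hq hρ hρθ hD hw hη₀ hsupp
    (fun x hx => hsub x (hball_sub hx)) fun x y hy => hηlip x y ((hnbr x y).1 hy)
  have hgrad : (2 / (s * n - s' * n)) ^ 2 * n ^ 2 = 4 / (s - s') ^ 2 := by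
    rw [← sub_mul]
    field_simp
    norm_num
  rw [rpow_two_mul_one_sub_eq_sq hn.le hd, hgrad] at henergy
  have hweights : scaledNrm (n ^ d) (ball x₀ (s * n)) p (mu nbr ω) *
      scaledNrm (n ^ d) (ball x₀ (s * n)) q (nu nbr ω) ≤ M := by
    refine (mul_le_mul (scaledNrm_mono hD.le hp.nonneg hball_sub fun _ _ => le_rfl)
      (scaledNrm_mono hD.le hq.nonneg hball_sub fun _ _ => le_rfl) (scaledNrm_nonneg hD.le)
      (scaledNrm_nonneg hD.le)).trans hμν
  calc c ^ 2 * scaledNrm (n ^ d) (ball x₀ (s' * n)) (2 * ρ) w ^ 2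
      ≤ c ^ 2 * scaledNrm (n ^ d) (ball x₀ (s * n)) (2 * ρ) (fun x => η x * w x) ^ 2 := by
        gcongr
        exact scaledNrm_nonneg hD.le
    _ ≤ (2 * ρ * (1 - 1 / d)) ^ 2 * (4 / (s - s') ^ 2) * M *
          scaledNrm (n ^ d) (ball x₀ (s * n)) (2 * p') w ^ 2 := henergy.trans (by gcongr)
    _ = _ := by ring

/-- The constant of the reverse Hölder inequalities, in terms of the constant `c` of the Sobolev
inequality, its exponent `θ` and the exponent `ρ` of the weighted Sobolev inequality. -/
def holderConst (c ρ θ : ℝ) : ℝ := 4 + 4 * (2 * ρ * θ) ^ 2 / c ^ 2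

lemma four_le_holderConst : 4 ≤ holderConst c ρ θ := le_add_of_nonneg_right (by positivity)

lemma SobolevInequality.sq_scaledNrm_le (hsob : SobolevInequality nbr c (1 - 1 / d))
    (hnbr : ∀ x y, y ∈ nbr x ↔ G.Adj x y) (hball : IsBall G ball) (hω : IsConductance nbr ω)
    (hd : d ≠ 0) (hc : 0 < c) (hp : p.HolderConjugate p') (hq : q.HolderConjugate q')
    (hρθ : 1 / ρ = 2 * (1 - 1 / (d : ℝ)) - 1 / q') (hρ : p' ≤ ρ) (hn : 1 ≤ n) (hM : 1 ≤ M)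
    (hμν : scaledNrm (n ^ d) (ball x₀ n) p (mu nbr ω) *
      scaledNrm (n ^ d) (ball x₀ n) q (nu nbr ω) ≤ M)
    (hw : ∀ x, 0 ≤ w x) (hsub : ∀ x ∈ ball x₀ n, 0 ≤ ∑ y ∈ nbr x, ω x y * (w y - w x))
    (hss : s' < s) (hs : s ≤ 1) :
    scaledNrm (n ^ d) (ball x₀ (s' * n)) (2 * ρ) w ^ 2 ≤
      holderConst c ρ (1 - 1 / d) * M / (s - s') ^ 2 *
        scaledNrm (n ^ d) (ball x₀ (s * n)) (2 * p') w ^ 2 := by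
  have hn₀ : 0 < n := by linarith
  have hδ : 0 < s - s' := sub_pos.2 hss
  set N := scaledNrm (n ^ d) (ball x₀ (s * n)) (2 * p') w
  rcases lt_or_ge ((s - s') * n) 2 with hsmall | hlarge
  · have hscale : n ^ 2 ≤ 4 / (s - s') ^ 2 := by
      rw [le_div_iff₀ (by positivity), ← mul_pow, mul_comm]
      nlinarith [mul_pos hδ hn₀]
    have h := sq_scaledNrm_le_of_small_scale (w := w) (one_le_pow₀ (n := d) hn) hp hq hρθ hρ
      (hball.mono x₀ (by gcongr : s' * n ≤ s * n))
    rw [rpow_two_mul_one_sub_eq_sq hn₀.le hd] at h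
    have hconst : 4 ≤ holderConst c ρ (1 - 1 / d) * M := by
      nlinarith [four_le_holderConst (c := c) (ρ := ρ) (θ := 1 - 1 / d)]
    exact h.trans (by gcongr; exact hscale.trans (by gcongr))
  · have h := hsob.sq_scaledNrm_le_of_large_scale hnbr hball hω hd hc.le hp hq
      (hp.symm.pos.trans_le hρ) hρθ hn₀ hμν hw hsub hlarge hs
    rw [← le_div_iff₀' (by positivity)] at h
    refine h.trans ?_
    rw [mul_div_right_comm, div_right_comm, mul_div_right_comm]
    gcongr
    exact le_add_of_nonneg_left (by norm_num)

theorem SobolevInequality.reverseHolder (hsob : SobolevInequality nbr c (1 - 1 / d))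
    (hnbr : ∀ x y, y ∈ nbr x ↔ G.Adj x y) (hball : IsBall G ball) (hω : IsConductance nbr ω)
    (hd : d ≠ 0) (hc : 0 < c) (hp : p.HolderConjugate p') (hq : q.HolderConjugate q')
    (hρθ : 1 / ρ = 2 * (1 - 1 / (d : ℝ)) - 1 / q') (hρ : p' ≤ ρ) (hn : 1 ≤ n) (hM : 1 ≤ M)
    (hμν : scaledNrm (n ^ d) (ball x₀ n) p (mu nbr ω) *
      scaledNrm (n ^ d) (ball x₀ n) q (nu nbr ω) ≤ M)
    (hu : ∀ x, 0 ≤ u x) (hsub : ∀ x ∈ ball x₀ n, 0 ≤ lap nbr ω u x) :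
    ReverseHolder (fun s => ball x₀ (s * n)) u (n ^ d) (holderConst c ρ (1 - 1 / d) * M)
      (ρ / p') (2 * p') := by
  intro β hβ s' s hss hs
  have hD : 0 ≤ n ^ d := by positivity
  have hβ₀ : 0 < β := by linarith
  have := sub_pos.2 hss
  have hconst : 0 ≤ holderConst c ρ (1 - 1 / d) := by
    linarith [four_le_holderConst (c := c) (ρ := ρ) (θ := 1 - 1 / d)]
  have hpow := hsob.sq_scaledNrm_le hnbr hball hω hd hc hp hq hρθ hρ hn hM hμν
    (fun x => Real.rpow_nonneg (hu x) β)
    (fun x hx => hω.sum_mul_rpow_sub_nonneg hu (hω.sum_mul_sub_nonneg_of_lap_nonneg (hsub x hx)) hβ)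
    hss hs
  simp only [scaledNrm_rpow hD hβ₀.ne' fun x _ => hu x,
    ← Real.rpow_mul_natCast (scaledNrm_nonneg hD), Nat.cast_ofNat, mul_comm β 2] at hpow
  rw [show ρ / p' * (2 * p' * β) = 2 * ρ * β by field_simp [hp.symm.ne_zero]]
  have hroot := Real.rpow_le_rpow (Real.rpow_nonneg (scaledNrm_nonneg hD) _) hpow
    (z := 1 / (2 * β)) (by positivity)
  rwa [Real.mul_rpow (by positivity) (Real.rpow_nonneg (scaledNrm_nonneg hD) _),
    one_div, Real.rpow_rpow_inv (scaledNrm_nonneg hD) (by positivity),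
    Real.rpow_rpow_inv (scaledNrm_nonneg hD) (by positivity), ← one_div] at hroot

end ReverseHolder

/-! ### Moser iteration -/

/-- The maximum of `u` over the smaller set `B s'` is controlled by the norm of exponent `r` over
the larger set `B s`, with a constant that is a power of `(s - s')⁻²`. -/
def MaximalInequality (B : ℝ → Finset V) (u : V → ℝ) (D A κ r : ℝ) : Prop :=
  ∀ s' s, 0 ≤ s' → s' < s → s ≤ 1 →
    ∀ x ∈ B s', u x ≤ (A / (s - s') ^ 2) ^ κ * scaledNrm D (B s) r u

section Moser

variable {B : ℝ → Finset V} {u : V → ℝ} {D A γ r : ℝ}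

lemma hasSum_add_one_mul_inv_pow (hγ : 1 < γ) :
    HasSum (fun i : ℕ => ((i : ℝ) + 1) * γ⁻¹ ^ i) (1 / (1 - γ⁻¹) ^ 2) := by
  have hnorm : ‖γ⁻¹‖ < 1 := by
    rw [Real.norm_of_nonneg (inv_nonneg.2 (by linarith))]
    exact inv_lt_one_of_one_lt₀ hγ
  simpa using hasSum_choose_mul_geometric_of_norm_lt_one 1 hnorm

lemma le_rpow_mul_of_le_rpow_mul {T e : ℕ → ℝ} {b F : ℝ} (hb : 1 ≤ b) (hT : 0 ≤ T 0)
    (he : ∀ i, 0 ≤ e i) (hF : HasSum e F) (hstep : ∀ i, T (i + 1) ≤ b ^ e i * T i) (i : ℕ) :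
    T i ≤ b ^ F * T 0 := by
  have hpartial : ∀ i, T i ≤ b ^ (∑ j ∈ range i, e j) * T 0 := fun i => by
    induction i with
    | zero => simp
    | succ i ih =>
      calc T (i + 1) ≤ b ^ e i * (b ^ (∑ j ∈ range i, e j) * T 0) :=
            (hstep i).trans (by gcongr)
        _ = b ^ (∑ j ∈ range (i + 1), e j) * T 0 := by
            rw [sum_range_succ_comm, Real.rpow_add (by linarith), mul_assoc]
  refine (hpartial i).trans (mul_le_mul_of_nonneg_right ?_ hT)
  exact Real.rpow_le_rpow_of_exponent_le hb (sum_le_hasSum _ (fun j _ => he j) hF)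

lemma le_of_forall_scaledNrm_le {C : ℝ} (hD : 0 < D) (hr : 0 < r)
    (hγ : 1 < γ) {S : ℕ → Finset V} {x : V} (hx : ∀ i, x ∈ S i)
    (hC : ∀ i, scaledNrm D (S i) (r * γ ^ i) u ≤ C) : u x ≤ C := by
  have hexp : Filter.Tendsto (fun i : ℕ => -(1 / (r * γ ^ i))) Filter.atTop (nhds 0) := by
    simpa using (((tendsto_pow_atTop_atTop_of_one_lt hγ).const_mul_atTop hr).const_div_atTop 1).neg
  have hlim : Filter.Tendsto (fun i : ℕ => D ^ (-(1 / (r * γ ^ i))) * u x) Filter.atTop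
      (nhds (u x)) := by
    simpa using (tendsto_const_nhds.rpow hexp (Or.inl hD.ne')).mul_const (u x)
  refine le_of_tendsto' hlim fun i => le_trans ?_ (hC i)
  refine mul_le_mul_of_nonneg_left ?_ (Real.rpow_nonneg hD.le _)
  exact (le_abs_self _).trans (abs_le_lpNrm (by positivity) (hx i))

/-- The exponent gains a factor `γ` at each step, and the `i`-th step costs the power `γ⁻ⁱ / 2`
of `A` over the square of the decrement `2 ^ (-(i + 1)) * δ` of the radius, a quotient which is at
most `(4 * A / δ ^ 2) ^ (i + 1)`. -/
lemma ReverseHolder.step (h : ReverseHolder B u D A γ r) (hD : 0 ≤ D) (hγ : 1 ≤ γ) {s' δ : ℝ}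
    (hδ : 0 < δ) (hδs : s' + δ ≤ 1) (hA : 1 ≤ A / δ ^ 2) (i : ℕ) :
    scaledNrm D (B (s' + δ * (1 / 2) ^ (i + 1))) (r * γ ^ (i + 1)) u ≤
      (4 * A / δ ^ 2) ^ (1 / 2 * (((i : ℝ) + 1) * γ⁻¹ ^ i)) *
        scaledNrm D (B (s' + δ * (1 / 2) ^ i)) (r * γ ^ i) u := by
  have hA₀ : 0 ≤ A := by
    rw [one_le_div (by positivity)] at hA
    exact (sq_nonneg δ).trans hA
  have hhalf : (1 / 2 : ℝ) ^ i ≤ 1 := pow_le_one₀ (by norm_num) (by norm_num)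
  have hdiff : s' + δ * (1 / 2) ^ i - (s' + δ * (1 / 2) ^ (i + 1)) = δ * (1 / 2) ^ (i + 1) := by
    ring
  have hdec : 0 < δ * (1 / 2) ^ (i + 1) := by positivity
  have hi := h (γ ^ i) (one_le_pow₀ hγ) (s' + δ * (1 / 2) ^ (i + 1)) (s' + δ * (1 / 2) ^ i)
    (by linarith) (by nlinarith)
  have hconst : A / (δ * (1 / 2) ^ (i + 1)) ^ 2 ≤ (4 * A / δ ^ 2) ^ ((i : ℝ) + 1) := by
    calc A / (δ * (1 / 2) ^ (i + 1)) ^ 2 = 4 ^ (i + 1) * (A / δ ^ 2) := by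
          have hpow : ((1 / 2 : ℝ) ^ (i + 1)) ^ 2 = (4 ^ (i + 1))⁻¹ := by
            rw [← pow_mul, mul_comm, pow_mul, ← inv_pow]
            norm_num
          rw [mul_pow, hpow]
          field_simp
      _ ≤ 4 ^ (i + 1) * (A / δ ^ 2) ^ (i + 1) := by
          gcongr
          exact le_self_pow₀ hA i.succ_ne_zero
      _ = (4 * A / δ ^ 2) ^ ((i : ℝ) + 1) := by
          rw [← mul_pow, ← mul_div_assoc, ← Real.rpow_natCast]
          push_cast
          rfl
  rw [hdiff, show γ * (r * γ ^ i) = r * γ ^ (i + 1) by ring] at hi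
  refine hi.trans (mul_le_mul_of_nonneg_right ?_ (scaledNrm_nonneg hD))
  calc (A / (δ * (1 / 2) ^ (i + 1)) ^ 2) ^ (1 / (2 * γ ^ i))
      ≤ ((4 * A / δ ^ 2) ^ ((i : ℝ) + 1)) ^ (1 / (2 * γ ^ i)) :=
        Real.rpow_le_rpow (div_nonneg hA₀ (sq_nonneg _)) hconst (by positivity)
    _ = (4 * A / δ ^ 2) ^ (1 / 2 * (((i : ℝ) + 1) * γ⁻¹ ^ i)) := by
        rw [← Real.rpow_mul (by positivity)]
        congr 1
        rw [inv_pow]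
        field_simp

theorem ReverseHolder.maximalInequality (h : ReverseHolder B u D A γ r) (hB : Monotone B)
    (hD : 0 < D) (hA : 1 ≤ A) (hr : 0 < r) (hγ : 1 < γ) :
    MaximalInequality B u D (4 * A) (1 / 2 * (1 / (1 - γ⁻¹) ^ 2)) r := by
  intro s' s hs' hss hs x hx
  have hδ : 0 < s - s' := sub_pos.2 hss
  have hAδ : 1 ≤ A / (s - s') ^ 2 :=
    (one_le_div (by positivity)).2 ((pow_le_one₀ hδ.le (by linarith)).trans hA)
  have hiterate := le_rpow_mul_of_le_rpow_mul
    (T := fun i => scaledNrm D (B (s' + (s - s') * (1 / 2) ^ i)) (r * γ ^ i) u)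
    (b := 4 * A / (s - s') ^ 2) (by rw [mul_div_assoc]; linarith) (scaledNrm_nonneg hD.le)
    (fun i => by positivity) ((hasSum_add_one_mul_inv_pow hγ).mul_left (1 / 2))
    (h.step hD.le hγ.le hδ (by linarith) hAδ)
  simp only [pow_zero, mul_one, add_sub_cancel] at hiterate
  refine le_of_forall_scaledNrm_le hD hr hγ (fun i => hB ?_ hx) hiterate
  exact le_add_of_nonneg_right (by positivity)

end Moser

/-! ### Small exponents -/

section SmallExponents

variable {B : ℝ → Finset V} {S : Finset V} {u f : V → ℝ} {D A κ r α m s : ℝ}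

lemma le_rpow_mul_of_le_mul_rpow_mul {M W N t : ℝ} (hM : 0 ≤ M) (hW : 0 ≤ W) (hN : 0 ≤ N)
    (ht : 0 < t) (h : M ≤ W * (M ^ (1 - t) * N ^ t)) : M ≤ W ^ (1 / t) * N := by
  rcases hM.eq_or_lt with rfl | hM
  · positivity
  have habsorb : M ^ t ≤ W * N ^ t := by
    refine le_of_mul_le_mul_right ?_ (Real.rpow_pos_of_pos hM (1 - t))
    rw [← Real.rpow_add hM, add_sub_cancel, Real.rpow_one]
    linarith
  calc M = (M ^ t) ^ (1 / t) := by rw [one_div, Real.rpow_rpow_inv hM.le ht.ne']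
    _ ≤ (W * N ^ t) ^ (1 / t) := by gcongr
    _ = W ^ (1 / t) * N := by
        rw [Real.mul_rpow hW (by positivity), one_div, Real.rpow_rpow_inv hN ht.ne']

lemma scaledNrm_le_rpow_mul_rpow (hD : 0 ≤ D) (hα : 0 < α) (hαr : α ≤ r) (hm : 0 ≤ m)
    (hf : ∀ x ∈ S, |f x| ≤ m) :
    scaledNrm D S r f ≤ m ^ (1 - α / r) * scaledNrm D S α f ^ (α / r) := by
  have hr : 0 < r := hα.trans_le hαr
  have hsum : ∑ x ∈ S, |f x| ^ r ≤ m ^ (r - α) * ∑ x ∈ S, |f x| ^ α := by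
    rw [mul_sum]
    refine sum_le_sum fun x hx => ?_
    calc |f x| ^ r = |f x| ^ (r - α) * |f x| ^ α := by
          rw [← Real.rpow_add_of_nonneg (abs_nonneg _) (by linarith) hα.le, sub_add_cancel]
      _ ≤ m ^ (r - α) * |f x| ^ α := by
          gcongr
          exact hf x hx
  have hlp : lpNrm S r f ≤ m ^ (1 - α / r) * lpNrm S α f ^ (α / r) := by
    calc lpNrm S r f ≤ (m ^ (r - α) * ∑ x ∈ S, |f x| ^ α) ^ (1 / r) :=
          Real.rpow_le_rpow sum_abs_rpow_nonneg hsum (by positivity)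
      _ = m ^ (1 - α / r) * lpNrm S α f ^ (α / r) := by
          rw [Real.mul_rpow (by positivity) sum_abs_rpow_nonneg, lpNrm, ← Real.rpow_mul hm,
            ← Real.rpow_mul sum_abs_rpow_nonneg]
          congr 2 <;> field_simp
  calc scaledNrm D S r f ≤ D ^ (-(1 / r)) * (m ^ (1 - α / r) * lpNrm S α f ^ (α / r)) :=
        mul_le_mul_of_nonneg_left hlp (Real.rpow_nonneg hD _)
    _ = m ^ (1 - α / r) * scaledNrm D S α f ^ (α / r) := by
        rw [scaledNrm, Real.mul_rpow (Real.rpow_nonneg hD _) lpNrm_nonneg, ← Real.rpow_mul hD,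
          show -(1 / α) * (α / r) = -(1 / r) by field_simp]
        ring

/-- One step of the absorption argument: the maximal inequality between the radius `t` and the
midpoint of `[t, s]`, with the supremum at the midpoint bounded in terms of `M`. The power
`κ * r / α` of the distance to `s` is the one for which all powers of `s - t` cancel. -/
lemma MaximalInequality.mul_le_of_forall_mul_le (h : MaximalInequality B u D A κ r)
    (hB : Monotone B) (hu : ∀ x, 0 ≤ u x) (hD : 0 ≤ D) (hA : 0 ≤ A) (hα : 0 < α)
    (hαr : α ≤ r) {M t : ℝ} (ht : 0 ≤ t) (hts : t < s) (hs : s ≤ 1)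
    (hM : ∀ y ∈ B ((t + s) / 2), ((s - (t + s) / 2) ^ 2) ^ (κ * r / α) * u y ≤ M) {x : V}
    (hx : x ∈ B t) :
    ((s - t) ^ 2) ^ (κ * r / α) * u x ≤
      A ^ κ * 4 ^ (κ * r / α) * (M ^ (1 - α / r) * scaledNrm D (B s) α u ^ (α / r)) := by
  have hr : 0 < r := hα.trans_le hαr
  have hmid : t ≤ (t + s) / 2 := by linarith
  set e := (s - (t + s) / 2) ^ 2 with he
  set k := κ * r / α with hk
  have he₀ : 0 < e := pow_pos (by linarith) 2
  have hek : 0 < e ^ k := Real.rpow_pos_of_pos he₀ k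
  have hM₀ : 0 ≤ M := (mul_nonneg hek.le (hu x)).trans (hM x (hB hmid hx))
  have hmax := h t ((t + s) / 2) ht (by linarith) (by linarith) x hx
  rw [show (t + s) / 2 - t = s - (t + s) / 2 by ring, ← he] at hmax
  have hinterp : scaledNrm D (B ((t + s) / 2)) r u ≤
      (M / e ^ k) ^ (1 - α / r) * scaledNrm D (B s) α u ^ (α / r) := by
    refine (scaledNrm_le_rpow_mul_rpow hD hα hαr (div_nonneg hM₀ hek.le) fun y hy => ?_).trans ?_
    · rw [abs_of_nonneg (hu y), le_div_iff₀ hek, mul_comm]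
      exact hM y hy
    · gcongr
      · exact scaledNrm_nonneg hD
      · exact scaledNrm_mono hD hα.le (hB (by linarith)) fun _ _ => le_rfl
  have hcancel : e ^ k = e ^ κ * (e ^ k) ^ (1 - α / r) := by
    rw [← Real.rpow_mul he₀.le, ← Real.rpow_add he₀, hk]
    congr 1
    field_simp
    ring
  calc ((s - t) ^ 2) ^ k * u x
      ≤ (4 * e) ^ k *
          ((A / e) ^ κ * ((M / e ^ k) ^ (1 - α / r) * scaledNrm D (B s) α u ^ (α / r))) := by
        rw [show (s - t) ^ 2 = 4 * e by rw [he]; ring]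
        gcongr
        exact hmax.trans (by gcongr)
    _ = e ^ k / (e ^ κ * (e ^ k) ^ (1 - α / r)) * (A ^ κ * 4 ^ k *
          (M ^ (1 - α / r) * scaledNrm D (B s) α u ^ (α / r))) := by
        rw [Real.mul_rpow (by norm_num) he₀.le, Real.div_rpow hA he₀.le,
          Real.div_rpow hM₀ hek.le]
        ring
    _ = A ^ κ * 4 ^ k * (M ^ (1 - α / r) * scaledNrm D (B s) α u ^ (α / r)) := by
        rw [← hcancel, div_self hek.ne', one_mul]

theorem MaximalInequality.small_exponent (h : MaximalInequality B u D A κ r) (hB : Monotone B)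
    (hu : ∀ x, 0 ≤ u x) (hD : 0 ≤ D) (hA : 0 ≤ A) (hκ : 0 ≤ κ) (hα : 0 < α) (hαr : α ≤ r) :
    MaximalInequality B u D (4 ^ (r / α) * A) (κ * r / α) α := by
  intro s' s hs' hss hs x hx
  have hr : 0 < r := hα.trans_le hαr
  set k := κ * r / α with hk
  have hk₀ : 0 ≤ k := by positivity
  let Z : Set ℝ := {z | ∃ t, s' ≤ t ∧ t < s ∧ ∃ y ∈ B t, ((s - t) ^ 2) ^ k * u y = z}
  have hbdd : BddAbove Z := by
    refine ⟨∑ y ∈ B s, u y, ?_⟩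
    rintro _ ⟨t, hst, hts, y, hy, rfl⟩
    have hweight : ((s - t) ^ 2) ^ k ≤ 1 := Real.rpow_le_one (sq_nonneg _)
      (pow_le_one₀ (by linarith) (by linarith)) hk₀
    exact (mul_le_of_le_one_left (hu y) hweight).trans
      (single_le_sum (fun y _ => hu y) (hB hts.le hy))
  have hmemZ : ((s - s') ^ 2) ^ k * u x ∈ Z := ⟨s', le_rfl, hss, x, hx, rfl⟩
  have hsup₀ : 0 ≤ sSup Z :=
    (mul_nonneg (Real.rpow_nonneg (sq_nonneg _) _) (hu x)).trans (le_csSup hbdd hmemZ)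
  have hsup :
      sSup Z ≤ A ^ κ * 4 ^ k * (sSup Z ^ (1 - α / r) * scaledNrm D (B s) α u ^ (α / r)) := by
    refine csSup_le ⟨_, hmemZ⟩ ?_
    rintro _ ⟨t, hst, hts, y, hy, rfl⟩
    exact h.mul_le_of_forall_mul_le hB hu hD hA hα hαr (hs'.trans hst) hts hs
      (fun v hv => le_csSup hbdd ⟨(t + s) / 2, by linarith, by linarith, v, hv, rfl⟩) hy
  have hconst : (A ^ κ * 4 ^ k) ^ (1 / (α / r)) = (4 ^ (r / α) * A) ^ k := by
    rw [Real.mul_rpow (by positivity) (by positivity), Real.mul_rpow (by positivity) hA,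
      ← Real.rpow_mul hA, ← Real.rpow_mul (by norm_num), ← Real.rpow_mul (by norm_num), mul_comm,
      hk]
    congr 2 <;> field_simp
  have habsorb := le_rpow_mul_of_le_mul_rpow_mul hsup₀ (by positivity) (scaledNrm_nonneg hD)
    (by positivity) hsup
  rw [hconst] at habsorb
  have := sub_pos.2 hss
  rw [Real.div_rpow (by positivity) (by positivity), div_mul_eq_mul_div,
    le_div_iff₀ (by positivity), mul_comm]
  exact (le_csSup hbdd hmemZ).trans habsorb

end SmallExponents

lemma MaximalInequality.le_rpow_mul_nrm {B : ℝ → Finset V} {u : V → ℝ} {D A κ r α C s s' : ℝ}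
    (h : MaximalInequality B u D A κ r) (hB : Monotone B) (hu : ∀ x, 0 ≤ u x) (hD : 0 < D)
    (hA : 0 ≤ A) (hr : 0 < r) (hκr : 1 ≤ κ * r) (hα : 0 < α) (hC : 1 ≤ C) (hs' : 0 ≤ s')
    (hss : s' < s) (hs : s ≤ 1) (hcard : ((B s).card : ℝ) ≤ C * D) {x : V} (hx : x ∈ B s') :
    u x ≤ (4 ^ (r / min α r) * A * C / (s - s') ^ 2) ^ (max 1 (r / α) * κ) *
      nrm (B s) α u := by
  have hκ : 0 < κ := pos_of_mul_pos_left (one_pos.trans_le hκr) hr.le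
  have hmin : 0 < min α r := lt_min hα hr
  have hBs : (B s).Nonempty := ⟨x, hB hss.le hx⟩
  have hexp : κ * r / min α r = max 1 (r / α) * κ := by
    rw [mul_div_assoc, mul_comm]
    congr 1
    rcases le_total α r with hle | hle
    · rw [min_eq_left hle, max_eq_right ((one_le_div hα).2 hle)]
    · rw [min_eq_right hle, div_self hr.ne', max_eq_left ((div_le_one hα).2 hle)]
  have hmax := h.small_exponent hB hu hD.le hA hκ.le hmin (min_le_right α r) s' s hs' hss hs x hx
  rw [hexp] at hmax
  have hvolume : C ^ (1 / min α r) ≤ C ^ (max 1 (r / α) * κ) := by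
    refine Real.rpow_le_rpow_of_exponent_le hC ?_
    rw [← hexp]
    gcongr
  have hnorm : scaledNrm D (B s) (min α r) u ≤ C ^ (max 1 (r / α) * κ) * nrm (B s) α u :=
    (scaledNrm_le_rpow_mul_nrm hBs hD hmin hcard).trans
      (mul_le_mul hvolume (nrm_le_nrm hBs hmin (min_le_left α r)) nrm_nonneg (by positivity))
  calc u x ≤ (4 ^ (r / min α r) * A / (s - s') ^ 2) ^ (max 1 (r / α) * κ) *
        (C ^ (max 1 (r / α) * κ) * nrm (B s) α u) := hmax.trans (by gcongr)
    _ = _ := by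
        rw [← mul_assoc, ← Real.mul_rpow (by positivity) (by positivity), div_mul_eq_mul_div]

/-! ### The choice of the exponents -/

/-- The exponent `ρ` such that functions of finite Dirichlet energy are controlled in `ℓ^{2ρ}` when
`ν^ω` is controlled in `ℓ^b`. -/
def sobolevExponent (d : ℕ) (b : ℝ) : ℝ := (1 - 2 / d + 1 / b)⁻¹

/-- The exponent `κ` of the maximal inequality produced by Moser iteration, for the integrability
exponents `a` of `μ^ω` and `b` of `ν^ω`. -/
def moserExponent (d : ℕ) (a b : ℝ) : ℝ :=
  1 / 2 * (1 / (1 - (sobolevExponent d b / a.conjExponent)⁻¹) ^ 2)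

/-- The constant of the maximal inequality for the norm of exponent `α`, for the integrability
exponents `a` of `μ^ω` and `b` of `ν^ω`. -/
def moserConst (d : ℕ) (Creg Criso a b α : ℝ) : ℝ :=
  4 ^ (2 * a.conjExponent / min α (2 * a.conjExponent)) *
    (4 * (holderConst (isoConst d Creg Criso) (sobolevExponent d b) (1 - 1 / d) * Creg ^ 2)) * Creg

section Exponents

variable {d : ℕ} {a b α Creg Criso : ℝ}

lemma one_div_sobolevExponent (hb : 1 < b) :
    1 / sobolevExponent d b = 2 * (1 - 1 / (d : ℝ)) - 1 / b.conjExponent := by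
  have hconj := (Real.HolderConjugate.conjExponent hb).one_div_add_one_div
  rw [sobolevExponent, one_div, inv_inv]
  linear_combination hconj

lemma one_lt_sobolevExponent_div (hd : 2 ≤ d) (ha : 1 < a) (hb : 1 < b)
    (hab : 1 / a + 1 / b < 2 / (d : ℝ)) : 1 < sobolevExponent d b / a.conjExponent := by
  have hconj := Real.HolderConjugate.conjExponent ha
  have hP : 0 < a.conjExponent := hconj.symm.pos
  have hd' : 2 / (d : ℝ) ≤ 1 := div_le_one_of_le₀ (by exact_mod_cast hd) (by positivity)
  have hb₀ : 0 < 1 / b := by positivity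
  rw [one_lt_div hP, sobolevExponent, lt_inv_comm₀ hP (by linarith)]
  linarith [hconj.inv_add_inv_eq_one, one_div a]

lemma one_half_le_moserExponent (hγ : 1 < sobolevExponent d b / a.conjExponent) :
    1 / 2 ≤ moserExponent d a b := by
  have hinv : (sobolevExponent d b / a.conjExponent)⁻¹ < 1 := inv_lt_one_of_one_lt₀ hγ
  have hinv₀ : 0 < (sobolevExponent d b / a.conjExponent)⁻¹ := inv_pos.2 (by linarith)
  have hgain : 1 ≤ 1 / (1 - (sobolevExponent d b / a.conjExponent)⁻¹) ^ 2 :=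
    (one_le_div (pow_pos (by linarith) 2)).2 (pow_le_one₀ (by linarith) (by linarith))
  unfold moserExponent
  linarith

lemma moserConst_pos (hCreg : 0 < Creg) : 0 < moserConst d Creg Criso a b α := by
  have hholder : 0 < holderConst (isoConst d Creg Criso) (sobolevExponent d b) (1 - 1 / d) :=
    four_pos.trans_le four_le_holderConst
  unfold moserConst
  positivity

lemma one_le_moserConst (ha : 1 < a) (hα : 0 < α) (hCreg : 1 ≤ Creg) :
    1 ≤ moserConst d Creg Criso a b α := by
  have hP : 0 < a.conjExponent := (Real.HolderConjugate.conjExponent ha).symm.pos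
  have hpow : (1 : ℝ) ≤ 4 ^ (2 * a.conjExponent / min α (2 * a.conjExponent)) :=
    Real.one_le_rpow (by norm_num) (by positivity)
  have hholder := four_le_holderConst (c := isoConst d Creg Criso) (ρ := sobolevExponent d b)
    (θ := 1 - 1 / d)
  have hprod := one_le_mul_of_one_le_of_one_le (by linarith) (one_le_pow₀ (n := 2) hCreg)
  exact one_le_mul_of_one_le_of_one_le (one_le_mul_of_one_le_of_one_le hpow (by linarith)) hCreg

end Exponents

/-- Lowering the exponents slightly makes them finite without leaving the admissible range. -/
lemma exists_real_exponents {d : ℕ} (hd : 2 ≤ d) {p q : ℝ≥0∞} (hp : 1 < p) (hq : 1 < q)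
    (hpq : p⁻¹ + q⁻¹ < 2 / (d : ℝ≥0∞)) :
    ∃ a b : ℝ, 1 < a ∧ 1 < b ∧ 1 / a + 1 / b < 2 / (d : ℝ) ∧ ENNReal.ofReal a ≤ p ∧
      ENNReal.ofReal b ≤ q := by
  have hp' : p⁻¹ ≠ ⊤ := ENNReal.inv_ne_top.2 (by positivity)
  have hq' : q⁻¹ ≠ ⊤ := ENNReal.inv_ne_top.2 (by positivity)
  have hsum : p⁻¹.toReal + q⁻¹.toReal < 2 / (d : ℝ) := by
    have hfin : 2 / (d : ℝ≥0∞) ≠ ⊤ :=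
      ENNReal.div_ne_top (by norm_num) (by exact_mod_cast (by omega : d ≠ 0))
    have h := (ENNReal.toReal_lt_toReal (ENNReal.add_ne_top.2 ⟨hp', hq'⟩) hfin).2 hpq
    rw [ENNReal.toReal_add hp' hq', ENNReal.toReal_div] at h
    simpa using h
  have hd' : 2 / (d : ℝ) ≤ 1 := div_le_one_of_le₀ (by exact_mod_cast hd) (by positivity)
  have hp₀ : 0 ≤ p⁻¹.toReal := ENNReal.toReal_nonneg
  have hq₀ : 0 ≤ q⁻¹.toReal := ENNReal.toReal_nonneg
  obtain ⟨ε, hε, hgap⟩ : ∃ ε > 0, p⁻¹.toReal + ε + (q⁻¹.toReal + ε) < 2 / (d : ℝ) :=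
    ⟨(2 / (d : ℝ) - p⁻¹.toReal - q⁻¹.toReal) / 3, by linarith, by linarith⟩
  have hle : ∀ r : ℝ≥0∞, r⁻¹ ≠ ⊤ → ENNReal.ofReal (1 / (r⁻¹.toReal + ε)) ≤ r := fun r hr => by
    rw [← ENNReal.inv_le_inv, one_div, ← ENNReal.ofReal_inv_of_pos (by positivity), inv_inv]
    exact (ENNReal.ofReal_toReal hr).symm.le.trans (ENNReal.ofReal_le_ofReal (by linarith))
  refine ⟨1 / (p⁻¹.toReal + ε), 1 / (q⁻¹.toReal + ε), ?_, ?_, ?_, hle p hp', hle q hq'⟩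
  · exact (one_lt_div (by positivity)).2 (by linarith)
  · exact (one_lt_div (by positivity)).2 (by linarith)
  · rwa [one_div_one_div, one_div_one_div]

lemma one_le_toReal_inv_one_sub_inv {p : ℝ≥0∞} (hp : 1 < p) : 1 ≤ ((1 - p⁻¹)⁻¹).toReal := by
  have hfin : (1 - p⁻¹)⁻¹ ≠ ⊤ :=
    ENNReal.inv_ne_top.2 (tsub_pos_of_lt (ENNReal.inv_lt_one.2 hp)).ne'
  simpa using ENNReal.toReal_mono hfin (ENNReal.one_le_inv.2 tsub_le_self)

/-! ### The maximal inequality -/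

lemma scaledNrm_mul_scaledNrm_le {A : Finset V} {f g : V → ℝ} {D C p q : ℝ} (hA : A.Nonempty)
    (hD : 0 < D) (hC : 1 ≤ C) (hp : 1 ≤ p) (hq : 1 ≤ q) (hAC : (A.card : ℝ) ≤ C * D) :
    scaledNrm D A p f * scaledNrm D A q g ≤ C ^ 2 * (nrm A p f * nrm A q g) := by
  have hnrm : ∀ (r : ℝ) (k : V → ℝ), 1 ≤ r → scaledNrm D A r k ≤ C * nrm A r k := fun r k hr =>
    (scaledNrm_le_rpow_mul_nrm hA hD (by linarith) hAC).trans (mul_le_mul_of_nonneg_right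
      (Real.rpow_le_self_of_one_le hC (div_le_one_of_le₀ hr (by linarith))) nrm_nonneg)
  calc scaledNrm D A p f * scaledNrm D A q g ≤ C * nrm A p f * (C * nrm A q g) :=
        mul_le_mul (hnrm p f hp) (hnrm q g hq) (scaledNrm_nonneg hD.le)
          (mul_nonneg (by linarith) nrm_nonneg)
    _ = C ^ 2 * (nrm A p f * nrm A q g) := by ring

section Subharmonic

variable {G : SimpleGraph V} {nbr : V → Finset V} {ball : V → ℝ → Finset V} {ω : V → V → ℝ}
  {u : V → ℝ} {x₀ : V} {d : ℕ} {Creg Criso a b α n K σ σ' : ℝ}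

theorem maximalInequality_of_lap_nonneg (hd : 2 ≤ d) (hCreg : 0 < Creg) (hCriso : 0 < Criso)
    (ha : 1 < a) (hb : 1 < b) (hab : 1 / a + 1 / b < 2 / (d : ℝ))
    (hnbr : ∀ x y, y ∈ nbr x ↔ G.Adj x y) (hG : G.Connected) (hball : IsBall G ball)
    (hreg : VolumeRegular ball d Creg) (hiso : RelIsoperimetric G ball Criso)
    (hω : IsConductance nbr ω) (hn : 1 ≤ n) (hu : ∀ x, 0 ≤ u x)
    (hsub : ∀ x ∈ ball x₀ n, 0 ≤ lap nbr ω u x) (hK : 1 ≤ K)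
    (hμν : nrm (ball x₀ n) a (mu nbr ω) * nrm (ball x₀ n) b (nu nbr ω) ≤ K) :
    MaximalInequality (fun s => ball x₀ (s * n)) u (n ^ d)
      (4 * (holderConst (isoConst d Creg Criso) (sobolevExponent d b) (1 - 1 / d) *
        (Creg ^ 2 * K))) (moserExponent d a b) (2 * a.conjExponent) := by
  have hCreg₁ : 1 ≤ Creg := hreg.one_le hCreg x₀
  have hn₀ : 0 < n := by linarith
  have hD : 0 < n ^ d := by positivity
  have hconj := Real.HolderConjugate.conjExponent ha
  have hγ := one_lt_sobolevExponent_div hd ha hb hab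
  have hd₁ : (1 : ℝ) < d := by exact_mod_cast hd
  have hsob := (isoperimetricInequality hG hball hreg hCreg hiso hCriso.le hd).sobolevInequality
    hnbr (isoConst_pos hCreg hCriso).le (sub_pos.2 ((div_lt_one (by linarith)).2 hd₁))
    (sub_le_self 1 (by positivity))
  have hM : 1 ≤ Creg ^ 2 * K := one_le_mul_of_one_le_of_one_le (one_le_pow₀ hCreg₁) hK
  have hscaled : scaledNrm (n ^ d) (ball x₀ n) a (mu nbr ω) *
      scaledNrm (n ^ d) (ball x₀ n) b (nu nbr ω) ≤ Creg ^ 2 * K :=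
    (scaledNrm_mul_scaledNrm_le ⟨x₀, hball.center_mem x₀ hn₀.le⟩ hD hCreg₁ ha.le hb.le
      (hreg x₀ n hn).2).trans (by gcongr)
  have hA := one_le_mul_of_one_le_of_one_le ((by norm_num : (1 : ℝ) ≤ 4).trans
    (four_le_holderConst (c := isoConst d Creg Criso) (ρ := sobolevExponent d b)
      (θ := 1 - 1 / (d : ℝ)))) hM
  exact (hsob.reverseHolder hnbr hball hω (by omega) (isoConst_pos hCreg hCriso) hconj
    (Real.HolderConjugate.conjExponent hb) (one_div_sobolevExponent hb)
    ((one_lt_div hconj.symm.pos).1 hγ).le hn hM hscaled hu hsub).maximalInequality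
    ((hball.mono x₀).comp (monotone_mul_right_of_nonneg hn₀.le)) hD hA
    (mul_pos two_pos hconj.symm.pos) hγ

theorem le_moserConst_rpow_mul_nrm (hd : 2 ≤ d) (hCreg : 0 < Creg) (hCriso : 0 < Criso)
    (ha : 1 < a) (hb : 1 < b) (hab : 1 / a + 1 / b < 2 / (d : ℝ)) (hα : 0 < α)
    (hnbr : ∀ x y, y ∈ nbr x ↔ G.Adj x y) (hG : G.Connected) (hball : IsBall G ball)
    (hreg : VolumeRegular ball d Creg) (hiso : RelIsoperimetric G ball Criso)
    (hω : IsConductance nbr ω) (hn : 1 ≤ n) (hu : ∀ x, 0 ≤ u x)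
    (hsub : ∀ x ∈ ball x₀ n, 0 ≤ lap nbr ω u x) (hK : 1 ≤ K)
    (hμν : nrm (ball x₀ n) a (mu nbr ω) * nrm (ball x₀ n) b (nu nbr ω) ≤ K)
    (hσ' : 0 ≤ σ') (hσσ : σ' < σ) (hσ : σ ≤ 1) {x : V} (hx : x ∈ ball x₀ (σ' * n)) :
    u x ≤ (moserConst d Creg Criso a b α * K / (σ - σ') ^ 2) ^
        (max 1 (2 * a.conjExponent / α) * moserExponent d a b) * nrm (ball x₀ (σ * n)) α u := by
  have hmax := maximalInequality_of_lap_nonneg hd hCreg hCriso ha hb hab hnbr hG hball hreg hiso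
    hω hn hu hsub hK hμν
  have hn₀ : 0 < n := by linarith
  have hP : 1 < a.conjExponent := (Real.HolderConjugate.conjExponent ha).symm.lt
  have hκ := one_half_le_moserExponent (one_lt_sobolevExponent_div hd ha hb hab)
  have hholder : 0 < holderConst (isoConst d Creg Criso) (sobolevExponent d b) (1 - 1 / d) :=
    four_pos.trans_le four_le_holderConst
  have hcard : ((ball x₀ (σ * n)).card : ℝ) ≤ Creg * n ^ d :=
    (Nat.cast_le.2 (card_le_card (hball.mono x₀ (mul_le_of_le_one_left hn₀.le hσ)))).trans
      (hreg x₀ n hn).2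
  refine (hmax.le_rpow_mul_nrm ((hball.mono x₀).comp (monotone_mul_right_of_nonneg hn₀.le)) hu
    (by positivity) (by positivity) (by positivity) (by nlinarith) hα (hreg.one_le hCreg x₀) hσ'
    hσσ hσ hcard hx).trans_eq ?_
  unfold moserConst
  congr 3
  ring

end Subharmonic

lemma max_one_mul_div_mul_le {P P' α κ : ℝ} (hP : 1 ≤ P) (hP' : 1 ≤ P') (hα : 0 < α)
    (hκ : 0 ≤ κ) : max 1 (2 * P / α) * κ ≤ max 1 (2 * P' / α) * (P * κ) := by
  rw [← mul_assoc]
  refine mul_le_mul_of_nonneg_right (max_le ?_ ?_) hκ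
  · exact one_le_mul_of_one_le_of_one_le (le_max_left _ _) hP
  · calc 2 * P / α ≤ 2 * P / α * P' := le_mul_of_one_le_right (by positivity) hP'
      _ = 2 * P' / α * P := by ring
      _ ≤ max 1 (2 * P' / α) * P := by
        gcongr
        exact le_max_right _ _

end RCM

open RCM in
theorem max_inequality_subharmonic_small_exponent_general (d : ℕ) (hd : 2 ≤ d) (Creg Criso : ℝ)
    (hCreg : 0 < Creg) (hCriso : 0 < Criso) (p q : ℝ≥0∞) (hp : 1 < p) (hq : 1 < q)
    (hpq : p⁻¹ + q⁻¹ < 2 / (d : ℝ≥0∞)) :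
    ∃ κ : ℝ, 0 < κ ∧ ∀ α : ℝ, 0 < α → ∃ C₅ : ℝ, 0 < C₅ ∧
      ∀ (V : Type*) (G : SimpleGraph V) (nbr : V → Finset V) (ball : V → ℝ → Finset V)
        (ω : V → V → ℝ),
        (∀ x y, y ∈ nbr x ↔ G.Adj x y) → G.Connected → IsBall G ball →
        VolumeRegular ball d Creg → RelIsoperimetric G ball Criso → IsConductance nbr ω →
        ∀ (x₀ : V) (n : ℝ), 1 ≤ n → ∀ u : V → ℝ, (∀ x, 0 ≤ u x) →
        (∀ x ∈ ball x₀ n, 0 ≤ lap nbr ω u x) →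
        ∀ σ' σ : ℝ, 0 ≤ σ' → σ' < σ → σ ≤ 1 →
        sSup (u '' (ball x₀ (σ' * n) : Set V)) ≤
          (C₅ * max 1 (nrmE (ball x₀ n) p (mu nbr ω) * nrmE (ball x₀ n) q (nu nbr ω)) /
              (σ - σ') ^ 2) ^ (max 1 (2 * ((1 - p⁻¹)⁻¹).toReal / α) * κ) *
            nrm (ball x₀ (σ * n)) α u := by
  obtain ⟨a, b, ha, hb, hab, hap, hbq⟩ := exists_real_exponents hd hp hq hpq
  have hP : 1 < a.conjExponent := (Real.HolderConjugate.conjExponent ha).symm.lt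
  have hκ := one_half_le_moserExponent (one_lt_sobolevExponent_div hd ha hb hab)
  refine ⟨a.conjExponent * moserExponent d a b, mul_pos (by linarith) (by linarith), fun α hα =>
    ⟨moserConst d Creg Criso a b α, moserConst_pos hCreg, ?_⟩⟩
  intro V G nbr ball ω hnbr hG hball hreg hiso hω x₀ n hn u hu hsub σ' σ hσ' hσσ hσ
  have hne : ∀ r : ℝ, 0 ≤ r → (ball x₀ r).Nonempty := fun r hr => ⟨x₀, hball.center_mem x₀ hr⟩
  have hnrm := mul_le_mul (nrm_le_nrmE (f := mu nbr ω) (hne n (by linarith)) (by linarith) hap)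
    (nrm_le_nrmE (f := nu nbr ω) (hne n (by linarith)) (by linarith) hbq) nrm_nonneg
    (nrm_nonneg.trans (nrm_le_nrmE (hne n (by linarith)) (by linarith) hap))
  have hbase : 1 ≤ moserConst d Creg Criso a b α *
      max 1 (nrmE (ball x₀ n) p (mu nbr ω) * nrmE (ball x₀ n) q (nu nbr ω)) / (σ - σ') ^ 2 := by
    rw [one_le_div (pow_pos (sub_pos.2 hσσ) 2)]
    exact (pow_le_one₀ (by linarith) (by linarith)).trans (one_le_mul_of_one_le_of_one_le
      (one_le_moserConst ha hα (hreg.one_le hCreg x₀)) (le_max_left _ _))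
  refine csSup_le ((hne (σ' * n) (by positivity)).to_set.image u) ?_
  rintro _ ⟨x, hx, rfl⟩
  exact (le_moserConst_rpow_mul_nrm hd hCreg hCriso ha hb hab hα hnbr hG hball hreg hiso hω hn hu
    hsub (le_max_left _ _) (hnrm.trans (le_max_right _ _)) hσ' hσσ hσ hx).trans
    (mul_le_mul_of_nonneg_right (Real.rpow_le_rpow_of_exponent_le hbase
      (max_one_mul_div_mul_le hP.le (one_le_toReal_inv_one_sub_inv hp) hα (by linarith)))
      nrm_nonneg)

open RCM in
/-- **Maximal inequality for subharmonic functions with small exponents.** -/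
theorem max_inequality_subharmonic_small_exponent
    (d : ℕ) (hd : 2 ≤ d) (Creg Criso : ℝ) (hCreg : 0 < Creg) (hCriso : 0 < Criso)
    (p q : ℝ≥0∞) (hp : 1 < p) (hq : 1 < q) (hpq : p⁻¹ + q⁻¹ < 2 / (d : ℝ≥0∞)) :
    ∃ κ : ℝ, 0 < κ ∧ ∀ α : ℝ, 0 < α → ∃ C₅ : ℝ, 0 < C₅ ∧
      ∀ (V : Type) (G : SimpleGraph V) (nbr : V → Finset V)
        (_ : ∀ x y, y ∈ nbr x ↔ G.Adj x y)
        (_ : Infinite V) (_ : G.Connected)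
        (ball : V → ℝ → Finset V)
        (_ : ∀ (x : V) (r : ℝ) (y : V), y ∈ ball x r ↔ (G.dist x y : ℝ) ≤ r)
        (_ : ∀ (x : V) (r : ℝ), 1 ≤ r →
              Creg⁻¹ * r ^ d ≤ ((ball x r).card : ℝ) ∧ ((ball x r).card : ℝ) ≤ Creg * r ^ d)
        (_ : ∀ (x : V) (r : ℝ) (A : Finset V), 1 ≤ r → A.Nonempty → A ⊆ ball x r →
              (A.card : ℝ) < ((ball x r).card : ℝ) / 2 →
              Criso / r ≤ ((RCM.relBdry G (ball x r) A).card : ℝ) / (A.card : ℝ))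
        (ω : V → V → ℝ)
        (_ : ∀ x y, ω x y = ω y x)
        (_ : ∀ x y, G.Adj x y → 0 < ω x y)
        (_ : ∀ x y, ¬ G.Adj x y → ω x y = 0)
        (x₀ : V) (n : ℝ) (_ : 1 ≤ n)
        (u : V → ℝ) (_ : ∀ x, 0 ≤ u x)
        (_ : ∀ x ∈ ball x₀ n, 0 ≤ lap nbr ω u x)
        (σ' σ : ℝ) (_ : 1 / 2 ≤ σ') (_ : σ' < σ) (_ : σ ≤ 1),
        sSup (u '' (ball x₀ (σ' * n) : Set V)) ≤
          (C₅ * max 1 (nrmE (ball x₀ n) p (mu nbr ω) * nrmE (ball x₀ n) q (nu nbr ω)) /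
              (σ - σ') ^ 2) ^ (max 1 (2 * ((1 - p⁻¹)⁻¹).toReal / α) * κ) *
            nrm (ball x₀ (σ * n)) α u := by
  obtain ⟨κ, hκ, h⟩ := max_inequality_subharmonic_small_exponent_general d hd Creg Criso hCreg
    hCriso p q hp hq hpq
  exact ⟨κ, hκ, fun α hα => (h α hα).imp fun C ⟨hC, hmax⟩ => ⟨hC, fun V G nbr hnbr _ hG ball hball
    hreg hiso ω hsymm hpos hzero x₀ n hn u hu hsub σ' σ hσ' => hmax V G nbr ball ω hnbr hG hball
      hreg hiso ⟨hsymm, fun x y hy => hpos x y ((hnbr x y).1 hy), fun x y hy => hzero x y fun h =>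
        hy ((hnbr x y).2 h)⟩ x₀ n hn u hu hsub σ' σ (by linarith)⟩⟩
end
end

section
/- Energy estimate for superharmonic functions: let B ⊂ V be a finite connected set, let η : V → ℝ satisfy η = 0 outside B, 0 ≤ η ≤ 1 and η ≡ 0 on ∂B, and let K ≥ 1 satisfy η(y)² ≤ K·η(x)² for every {x,y} ∈ E with η(x) ≠ 0. Then for every u : V → (0,∞) with (L_Y^ω u)(x) ≤ 0 for all x ∈ B and every α < 1/2: E^ω_{η²}(u^α)/|B| ≤ (32α²/(1−2α)²)·K·‖∇η‖²_{ℓ∞(E)}·‖u^{2α}‖_{1,B,μ^ω}. -/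
open Finset MeasureTheory
open scoped ENNReal

noncomputable section

/-!
Write `s = u x`, `t = u y`, `a = η x`, `b = η y`, `p = s ^ (2α - 1)`, `q = t ^ (2α - 1)` for an edge
with `s ≤ t`. Testing superharmonicity against `η² u ^ (2α - 1)` gives a nonpositive total to the
terms `(t - s) (a² p - b² q)`, and by Cauchy–Schwarz for `∫ x ^ (α - 1)` over `[s, t]` the energy
`(t ^ α - s ^ α)²` is at most `α² / (1 - 2α) * (t - s) (p - q)`. The point is to expand `b²` around
`a²`, the cutoff at the smaller value of `u`: the error then carries the smaller factor `q`, and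
`(1 - 2α) (t - s) q ≤ t (p - q)` lets half of `a² (t - s) (p - q)` absorb the cross term. What is
left is at most a multiple of `(b - a)² (s + t) (p + q)`, and superharmonicity once more bounds its
total by that of `u ^ (2α) μ`.
-/

namespace RCM

section RealInequalities

theorem sq_intervalIntegral_le {a b : ℝ} {f : ℝ → ℝ} (hab : a ≤ b)
    (hf : IntervalIntegrable f volume a b)
    (hf2 : IntervalIntegrable (fun x => f x ^ 2) volume a b) :
    (∫ x in a..b, f x) ^ 2 ≤ (b - a) * ∫ x in a..b, f x ^ 2 := by
  rcases hab.eq_or_lt with rfl | hlt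
  · simp
  set I := ∫ x in a..b, f x
  have hvar : 0 ≤ ∫ x in a..b, ((b - a) * f x - I) ^ 2 :=
    intervalIntegral.integral_nonneg hab fun x _ => sq_nonneg _
  have hexpand : ∫ x in a..b, ((b - a) * f x - I) ^ 2 =
      (b - a) * ((b - a) * (∫ x in a..b, f x ^ 2) - I ^ 2) :=
    calc ∫ x in a..b, ((b - a) * f x - I) ^ 2
      _ = ∫ x in a..b, ((b - a) ^ 2 * f x ^ 2 - 2 * (b - a) * I * f x + I ^ 2) := by
          congr 1 with x; ring
      _ = (b - a) ^ 2 * (∫ x in a..b, f x ^ 2) - 2 * (b - a) * I * I + (b - a) * I ^ 2 := by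
          rw [intervalIntegral.integral_add ((hf2.const_mul _).sub (hf.const_mul _)) (by simp),
            intervalIntegral.integral_sub (hf2.const_mul _) (hf.const_mul _),
            intervalIntegral.integral_const_mul, intervalIntegral.integral_const_mul,
            intervalIntegral.integral_const, smul_eq_mul]
      _ = (b - a) * ((b - a) * (∫ x in a..b, f x ^ 2) - I ^ 2) := by ring
  rw [hexpand] at hvar
  exact sub_nonneg.1 (nonneg_of_mul_nonneg_right hvar (sub_pos.2 hlt))

variable {s t α γ p q a b : ℝ}

theorem intervalIntegrable_rpow_of_pos (hs : 0 < s) (ht : 0 < t) (β : ℝ) :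
    IntervalIntegrable (fun x => x ^ β) volume s t :=
  intervalIntegral.intervalIntegrable_rpow (.inr (Set.notMem_uIcc_of_lt hs ht))

theorem rpow_sub_rpow_eq_mul_integral (hs : 0 < s) (ht : 0 < t) (β : ℝ) :
    t ^ β - s ^ β = β * ∫ x in s..t, x ^ (β - 1) := by
  rcases eq_or_ne β 0 with rfl | hβ
  · simp
  · rw [integral_rpow (.inr ⟨by simpa [sub_eq_neg_self] using hβ, Set.notMem_uIcc_of_lt hs ht⟩),
      sub_add_cancel, mul_div_cancel₀ _ hβ]

theorem rpow_sub_rpow_two_mul_sub_one_eq (hs : 0 < s) (ht : 0 < t) (α : ℝ) :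
    s ^ (2 * α - 1) - t ^ (2 * α - 1) = (1 - 2 * α) * ∫ x in s..t, x ^ (2 * α - 2) := by
  rw [← neg_sub (t ^ _), rpow_sub_rpow_eq_mul_integral hs ht, ← neg_mul, neg_sub,
    sub_sub, one_add_one_eq_two]

theorem mul_sq_rpow_sub_rpow_le (hs : 0 < s) (hst : s ≤ t) (hα : α ≤ 1 / 2) :
    (1 - 2 * α) * (t ^ α - s ^ α) ^ 2 ≤
      α ^ 2 * ((t - s) * (s ^ (2 * α - 1) - t ^ (2 * α - 1))) := by
  have ht : 0 < t := hs.trans_le hst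
  have hsq : ∀ x ∈ Set.uIcc s t, (x ^ (α - 1)) ^ 2 = x ^ (2 * α - 2) := fun x hx => by
    rw [← Real.rpow_mul_natCast ((lt_inf_iff.2 ⟨hs, ht⟩).trans_le hx.1).le]
    congr 1
    push_cast
    ring
  have hCS := sq_intervalIntegral_le hst (intervalIntegrable_rpow_of_pos hs ht (α - 1))
    ((intervalIntegrable_rpow_of_pos hs ht (2 * α - 2)).congr fun x hx =>
      (hsq x (Set.uIoc_subset_uIcc hx)).symm)
  rw [intervalIntegral.integral_congr hsq] at hCS
  rw [rpow_sub_rpow_eq_mul_integral hs ht, rpow_sub_rpow_two_mul_sub_one_eq hs ht, mul_pow]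
  calc (1 - 2 * α) * (α ^ 2 * (∫ x in s..t, x ^ (α - 1)) ^ 2)
    _ = (1 - 2 * α) * α ^ 2 * (∫ x in s..t, x ^ (α - 1)) ^ 2 := by ring
    _ ≤ (1 - 2 * α) * α ^ 2 * ((t - s) * ∫ x in s..t, x ^ (2 * α - 2)) := by
        have : 0 ≤ 1 - 2 * α := by linarith
        gcongr
    _ = _ := by ring

theorem sq_mul_sq_rpow_sub_rpow_le (hs : 0 < s) (hst : s ≤ t) (hα : α < 1 / 2) :
    (1 - 2 * α) ^ 2 * (t ^ α - s ^ α) ^ 2 ≤ 4 * α ^ 2 * (t * s ^ (2 * α - 1)) := by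
  have ht : 0 < t := hs.trans_le hst
  have hint : (1 - 2 * α) * ∫ x in s..t, x ^ (α - 1) ≤ 2 * (√t * s ^ (α - 1 / 2)) :=
    calc (1 - 2 * α) * ∫ x in s..t, x ^ (α - 1)
      _ ≤ (1 - 2 * α) * ∫ x in s..t, √t * x ^ (α - 1 / 2 - 1) := by
          refine mul_le_mul_of_nonneg_left ?_ (by linarith)
          refine intervalIntegral.integral_mono_on hst (intervalIntegrable_rpow_of_pos hs ht _)
            ((intervalIntegrable_rpow_of_pos hs ht _).const_mul _) fun x hx => ?_
          have hx0 : 0 < x := hs.trans_le hx.1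
          calc x ^ (α - 1) = √x * x ^ (α - 1 / 2 - 1) := by
                rw [Real.sqrt_eq_rpow, ← Real.rpow_add hx0]
                congr 1
                ring
            _ ≤ √t * x ^ (α - 1 / 2 - 1) := by
                gcongr
                exact hx.2
      _ = 2 * (√t * (s ^ (α - 1 / 2) - t ^ (α - 1 / 2))) := by
          rw [intervalIntegral.integral_const_mul]
          linear_combination (2 * √t) * rpow_sub_rpow_eq_mul_integral hs ht (α - 1 / 2)
      _ ≤ 2 * (√t * s ^ (α - 1 / 2)) := by
          gcongr
          exact sub_le_self _ (by positivity)
  have hint0 : 0 ≤ (1 - 2 * α) * ∫ x in s..t, x ^ (α - 1) :=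
    mul_nonneg (by linarith) (intervalIntegral.integral_nonneg hst fun x hx =>
      Real.rpow_nonneg (hs.le.trans hx.1) _)
  have hsq : (s ^ (α - 1 / 2)) ^ 2 = s ^ (2 * α - 1) := by
    rw [← Real.rpow_mul_natCast hs.le]
    congr 1
    push_cast
    ring
  calc (1 - 2 * α) ^ 2 * (t ^ α - s ^ α) ^ 2
    _ = α ^ 2 * ((1 - 2 * α) * ∫ x in s..t, x ^ (α - 1)) ^ 2 := by
        rw [rpow_sub_rpow_eq_mul_integral hs ht]; ring
    _ ≤ α ^ 2 * (2 * (√t * s ^ (α - 1 / 2))) ^ 2 := by gcongr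
    _ = 4 * α ^ 2 * (t * s ^ (2 * α - 1)) := by
        rw [mul_pow, mul_pow, Real.sq_sqrt ht.le, hsq]; ring

theorem mul_sub_mul_rpow_le (hs : 0 < s) (hst : s ≤ t) (hα : α ≤ 1 / 2) :
    (1 - 2 * α) * (t - s) * t ^ (2 * α - 1) ≤ t * (s ^ (2 * α - 1) - t ^ (2 * α - 1)) := by
  have ht : 0 < t := hs.trans_le hst
  have hmono : (t - s) * t ^ (2 * α - 2) ≤ ∫ x in s..t, x ^ (2 * α - 2) := by
    rw [← smul_eq_mul, ← intervalIntegral.integral_const]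
    exact intervalIntegral.integral_mono_on hst intervalIntegrable_const
      (intervalIntegrable_rpow_of_pos hs ht _) fun x hx =>
        Real.rpow_le_rpow_of_nonpos (hs.trans_le hx.1) hx.2 (by linarith)
  calc (1 - 2 * α) * (t - s) * t ^ (2 * α - 1)
    _ = t * (1 - 2 * α) * ((t - s) * t ^ (2 * α - 2)) := by
        rw [show 2 * α - 1 = 2 * α - 2 + 1 by ring, Real.rpow_add_one ht.ne']; ring
    _ ≤ t * (1 - 2 * α) * ∫ x in s..t, x ^ (2 * α - 2) := by
        have : 0 ≤ 1 - 2 * α := by linarith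
        gcongr
    _ = t * (s ^ (2 * α - 1) - t ^ (2 * α - 1)) := by
        rw [rpow_sub_rpow_two_mul_sub_one_eq hs ht]; ring

theorem cutoff_sq_mul_sub_mul_sub_le (ht : 0 < t) (hst : s ≤ t) (hγ : 0 ≤ γ) (hq : 0 ≤ q)
    (hpq : γ * (t - s) * q ≤ t * (p - q)) :
    γ * (a ^ 2 * ((t - s) * (p - q))) ≤
      2 * γ * ((t - s) * (a ^ 2 * p - b ^ 2 * q)) + 2 * (b - a) ^ 2 * (t * (p + q)) := by
  have hquad : 0 ≤ γ * (a ^ 2 * ((t - s) * (p - q))) - 4 * γ * (a * (b - a) * ((t - s) * q)) +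
      4 * (b - a) ^ 2 * (t * q) := by
    refine nonneg_of_mul_nonneg_right (a := t) ?_ ht
    -- The quadratic form in `(a, b - a)`, times `t`, dominates a perfect square.
    have hsq : 0 ≤ q * (γ * a * (t - s) - 2 * (b - a) * t) ^ 2 := by positivity
    have hscaled := mul_le_mul_of_nonneg_left hpq
      (mul_nonneg (mul_nonneg hγ (sq_nonneg a)) (sub_nonneg.2 hst))
    linear_combination hsq + hscaled
  linear_combination hquad + 2 * (b - a) ^ 2 * hpq

theorem edge_energy_le_of_le (hα : α < 1 / 2) (hs : 0 < s) (hst : s ≤ t) :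
    (1 - 2 * α) ^ 2 * ((a ^ 2 + b ^ 2) * (t ^ α - s ^ α) ^ 2) ≤
      6 * α ^ 2 * (1 - 2 * α) *
          ((t - s) * (a ^ 2 * s ^ (2 * α - 1) - b ^ 2 * t ^ (2 * α - 1))) +
        14 * α ^ 2 * (b - a) ^ 2 * (t * (s ^ (2 * α - 1) + t ^ (2 * α - 1))) := by
  have ht : 0 < t := hs.trans_le hst
  have hγ : 0 < 1 - 2 * α := by linarith
  have hp : 0 < s ^ (2 * α - 1) := Real.rpow_pos_of_pos hs _
  have hq : 0 < t ^ (2 * α - 1) := Real.rpow_pos_of_pos ht _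
  have hpower := mul_sq_rpow_sub_rpow_le hs hst hα.le
  have hcrude := sq_mul_sq_rpow_sub_rpow_le hs hst hα
  have hcutoff := cutoff_sq_mul_sub_mul_sub_le (a := a) (b := b) ht hst hγ.le hq.le
    (mul_sub_mul_rpow_le hs hst hα.le)
  have havg : a ^ 2 + b ^ 2 ≤ 3 * a ^ 2 + 2 * (b - a) ^ 2 := by
    linear_combination sq_nonneg (2 * a - b)
  set p := s ^ (2 * α - 1)
  set q := t ^ (2 * α - 1)
  set N := (t ^ α - s ^ α) ^ 2
  calc (1 - 2 * α) ^ 2 * ((a ^ 2 + b ^ 2) * N)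
    _ ≤ (1 - 2 * α) ^ 2 * ((3 * a ^ 2 + 2 * (b - a) ^ 2) * N) := by gcongr
    _ = 3 * (1 - 2 * α) * a ^ 2 * ((1 - 2 * α) * N) +
          2 * (b - a) ^ 2 * ((1 - 2 * α) ^ 2 * N) := by ring
    _ ≤ 3 * (1 - 2 * α) * a ^ 2 * (α ^ 2 * ((t - s) * (p - q))) +
          2 * (b - a) ^ 2 * (4 * α ^ 2 * (t * p)) := by gcongr
    _ = 3 * α ^ 2 * ((1 - 2 * α) * (a ^ 2 * ((t - s) * (p - q)))) +
          8 * α ^ 2 * (b - a) ^ 2 * (t * p) := by ring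
    _ ≤ 3 * α ^ 2 * (2 * (1 - 2 * α) * ((t - s) * (a ^ 2 * p - b ^ 2 * q)) +
            2 * (b - a) ^ 2 * (t * (p + q))) +
          8 * α ^ 2 * (b - a) ^ 2 * (t * (p + q)) := by
        gcongr
        exact le_add_of_nonneg_right hq.le
    _ = 6 * α ^ 2 * (1 - 2 * α) * ((t - s) * (a ^ 2 * p - b ^ 2 * q)) +
          14 * α ^ 2 * (b - a) ^ 2 * (t * (p + q)) := by ring

theorem edge_energy_le (hα : α < 1 / 2) (hs : 0 < s) (ht : 0 < t) :
    (1 - 2 * α) ^ 2 * ((a ^ 2 + b ^ 2) * (t ^ α - s ^ α) ^ 2) ≤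
      6 * α ^ 2 * (1 - 2 * α) *
          ((t - s) * (a ^ 2 * s ^ (2 * α - 1) - b ^ 2 * t ^ (2 * α - 1))) +
        14 * α ^ 2 * (b - a) ^ 2 * ((s + t) * (s ^ (2 * α - 1) + t ^ (2 * α - 1))) := by
  wlog hst : s ≤ t generalizing s t a b
  · linear_combination this (a := b) (b := a) ht hs (le_of_not_ge hst)
  refine (edge_energy_le_of_le hα hs hst).trans ?_
  gcongr
  exact le_add_of_nonneg_left hs.le

end RealInequalities

theorem sum_sum_le_sum_sum_of_add_swap_le {ι M : Type*} [AddCommGroup M] [LinearOrder M]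
    [IsOrderedAddMonoid M] {B : Finset ι} {f g : ι → ι → M}
    (h : ∀ x ∈ B, ∀ y ∈ B, f x y + f y x ≤ g x y + g y x) :
    ∑ x ∈ B, ∑ y ∈ B, f x y ≤ ∑ x ∈ B, ∑ y ∈ B, g x y := by
  have hdouble : ∀ k : ι → ι → M, ∑ x ∈ B, ∑ y ∈ B, (k x y + k y x) =
      ∑ x ∈ B, ∑ y ∈ B, k x y + ∑ x ∈ B, ∑ y ∈ B, k x y := fun k => by
    simp only [sum_add_distrib]
    rw [sum_comm (f := fun x y => k y x)]
  have hsum := sum_le_sum fun x hx => sum_le_sum (h x hx)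
  rw [hdouble, hdouble] at hsum
  exact le_of_not_gt fun hlt => (add_lt_add hlt hlt).not_ge hsum

theorem sum_le_sum_of_nonneg_of_eq_zero_off {ι M : Type*} [AddCommMonoid M] [PartialOrder M]
    [IsOrderedAddMonoid M] {s t : Finset ι} {f : ι → M} (hf : ∀ i, 0 ≤ f i)
    (ht : ∀ i ∉ t, f i = 0) : ∑ i ∈ s, f i ≤ ∑ i ∈ t, f i := by
  classical
  calc ∑ i ∈ s, f i
    _ = ∑ i ∈ s with i ∈ t, f i := (sum_filter_of_ne fun i _ => not_imp_comm.1 (ht i)).symm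
    _ ≤ ∑ i ∈ t, f i :=
        sum_le_sum_of_subset_of_nonneg (fun _ hi => (mem_filter.1 hi).2) fun i _ _ => hf i

theorem isBounded_range_of_eq_zero_off {ι X : Type*} [Zero X] [Bornology X] {B : Finset ι}
    {η : ι → X} (hη : ∀ x ∉ B, η x = 0) : Bornology.IsBounded (Set.range η) := by
  refine (((B.finite_toSet.image η).insert 0).subset ?_).isBounded
  rintro _ ⟨x, rfl⟩
  by_cases hx : x ∈ B
  · exact .inr ⟨x, hx, rfl⟩
  · exact .inl (hη x hx)

section Network

variable {V : Type*} {G : SimpleGraph V} {nbr : V → Finset V} {ω : V → V → ℝ} {B : Finset V}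
  {η u φ : V → ℝ} {α g : ℝ}

theorem mu_nonneg (hω : ∀ x y, 0 ≤ ω x y) (x : V) : 0 ≤ mu nbr ω x :=
  sum_nonneg fun y _ => hω x y

theorem nrmW_nonneg (hφ : ∀ x ∈ B, 0 ≤ φ x) (p : ℝ) (f : V → ℝ) : 0 ≤ nrmW B p φ f :=
  Real.rpow_nonneg (mul_nonneg (by positivity) (sum_nonneg fun x hx =>
    mul_nonneg (Real.rpow_nonneg (abs_nonneg _) _) (hφ x hx))) _

theorem nrmW_one (B : Finset V) (φ f : V → ℝ) :
    nrmW B 1 φ f = (B.card : ℝ)⁻¹ * ∑ x ∈ B, |f x| * φ x := by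
  simp only [nrmW, div_one, Real.rpow_one]

theorem mu_mul_lap (hω : ∀ x y, 0 ≤ ω x y) (f : V → ℝ) (x : V) :
    mu nbr ω x * lap nbr ω f x = ∑ y ∈ nbr x, ω x y * (f y - f x) := by
  rcases eq_or_ne (mu nbr ω x) 0 with hmu | hmu
  · have hzero := (sum_eq_zero_iff_of_nonneg fun y _ => hω x y).1 hmu
    rw [hmu, zero_mul, sum_eq_zero fun y hy => by rw [hzero y hy, zero_mul]]
  · rw [lap, mul_inv_cancel_left₀ hmu]

theorem abs_sub_le_gradSup (hη : Bornology.IsBounded (Set.range η)) {x y : V} (hxy : G.Adj x y) :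
    |η y - η x| ≤ gradSup G η := by
  obtain ⟨C, hC⟩ := Metric.isBounded_range_iff.1 hη
  refine le_csSup ⟨C, ?_⟩ ⟨x, y, hxy, rfl⟩
  rintro _ ⟨x, y, -, rfl⟩
  exact hC y x

theorem weight_eq_zero_of_cutoff_ne_zero (hzero : ∀ x y, ¬ G.Adj x y → ω x y = 0)
    (hsupp : ∀ x ∉ B, η x = 0) (hbdry : ∀ x ∈ intBdry G B, η x = 0) {x y : V}
    (hx : η x ≠ 0) (hy : y ∉ B) : ω x y = 0 := by
  refine hzero x y fun hxy => hx (hbdry x ?_)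
  simp only [intBdry, mem_filter]
  exact ⟨not_imp_comm.1 (hsupp x) hx, y, hy, hxy⟩

theorem energySq_eq_sum (hsupp : ∀ x ∉ B, η x = 0)
    (hout : ∀ x, η x ≠ 0 → ∀ y ∉ B, ω x y = 0) (v : V → ℝ) :
    energySq ω η v = 1 / 2 * ∑ x ∈ B, ∑ y ∈ B, η x ^ 2 * ω x y * (v y - v x) ^ 2 := by
  rw [energySq, tsum_eq_sum (s := B) fun x hx => by simp [hsupp x hx]]
  congr 1
  refine sum_congr rfl fun x _ => tsum_eq_sum fun y hy => ?_
  by_cases hx : η x = 0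
  · simp [hx]
  · simp [hout x hx y hy]

theorem sum_sum_weight_mul_sub_nonpos (hω : ∀ x y, 0 ≤ ω x y)
    (hzero : ∀ x, ∀ y ∉ nbr x, ω x y = 0) (hφ : ∀ x, 0 ≤ φ x)
    (hout : ∀ x, φ x ≠ 0 → ∀ y ∉ B, ω x y = 0) (hsuper : ∀ x ∈ B, lap nbr ω u x ≤ 0) :
    ∑ x ∈ B, ∑ y ∈ B, ω x y * (φ x * (u y - u x)) ≤ 0 := by
  refine sum_nonpos fun x hx => ?_
  by_cases hφx : φ x = 0
  · simp [hφx]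
  calc ∑ y ∈ B, ω x y * (φ x * (u y - u x))
    _ = φ x * ∑ y ∈ B, ω x y * (u y - u x) := by
        rw [mul_sum]
        exact sum_congr rfl fun y _ => mul_left_comm _ _ _
    _ = φ x * ∑ y ∈ nbr x, ω x y * (u y - u x) := by
        congr 1
        exact sum_congr_of_eq_on_inter (fun y _ hy => by rw [hzero x y hy, zero_mul])
          (fun y _ hy => by rw [hout x hφx y hy, zero_mul]) fun _ _ _ => rfl
    _ = φ x * (mu nbr ω x * lap nbr ω u x) := by rw [mu_mul_lap hω]
    _ ≤ 0 := mul_nonpos_of_nonneg_of_nonpos (hφ x)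
        (mul_nonpos_of_nonneg_of_nonpos (mu_nonneg hω x) (hsuper x hx))

theorem sum_sum_weight_mul_add_le (hω : ∀ x y, 0 ≤ ω x y)
    (hzero : ∀ x, ∀ y ∉ nbr x, ω x y = 0) (hφ : ∀ x, 0 ≤ φ x) (hu : ∀ x, 0 ≤ u x)
    (hsuper : ∀ x ∈ B, lap nbr ω u x ≤ 0) :
    ∑ x ∈ B, ∑ y ∈ B, ω x y * (φ x * (u x + u y)) ≤
      2 * ∑ x ∈ B, φ x * u x * mu nbr ω x := by
  rw [mul_sum]
  refine sum_le_sum fun x hx => ?_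
  have hsum : ∑ y ∈ nbr x, ω x y * (u x + u y) =
      2 * (u x * mu nbr ω x) + mu nbr ω x * lap nbr ω u x := by
    rw [mu_mul_lap hω, mu, mul_sum, mul_sum, ← sum_add_distrib]
    exact sum_congr rfl fun y _ => by ring
  have hlap : mu nbr ω x * lap nbr ω u x ≤ 0 :=
    mul_nonpos_of_nonneg_of_nonpos (mu_nonneg hω x) (hsuper x hx)
  calc ∑ y ∈ B, ω x y * (φ x * (u x + u y))
    _ = φ x * ∑ y ∈ B, ω x y * (u x + u y) := by
        rw [mul_sum]
        exact sum_congr rfl fun y _ => mul_left_comm _ _ _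
    _ ≤ φ x * ∑ y ∈ nbr x, ω x y * (u x + u y) :=
        mul_le_mul_of_nonneg_left
          (sum_le_sum_of_nonneg_of_eq_zero_off
            (fun y => mul_nonneg (hω x y) (add_nonneg (hu x) (hu y)))
            fun y hy => by rw [hzero x y hy, zero_mul]) (hφ x)
    _ ≤ φ x * (2 * (u x * mu nbr ω x)) :=
        mul_le_mul_of_nonneg_left (hsum.trans_le (add_le_of_nonpos_right hlap)) (hφ x)
    _ = 2 * (φ x * u x * mu nbr ω x) := by ring

theorem sum_sum_edge_energy_le (hsymm : ∀ x y, ω x y = ω y x) (hω : ∀ x y, 0 ≤ ω x y)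
    (hgrad : ∀ x y, ω x y ≠ 0 → (η y - η x) ^ 2 ≤ g) (hu : ∀ x, 0 < u x) (hα : α < 1 / 2) :
    (1 - 2 * α) ^ 2 * ∑ x ∈ B, ∑ y ∈ B, η x ^ 2 * ω x y * (u y ^ α - u x ^ α) ^ 2 ≤
      6 * α ^ 2 * (1 - 2 * α) *
          ∑ x ∈ B, ∑ y ∈ B, ω x y * (η x ^ 2 * u x ^ (2 * α - 1) * (u y - u x)) +
        14 * α ^ 2 * g *
          ∑ x ∈ B, ∑ y ∈ B, ω x y * (u x ^ (2 * α - 1) * (u x + u y)) := by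
  simp only [mul_sum, ← sum_add_distrib]
  refine sum_sum_le_sum_sum_of_add_swap_le fun x _ y _ => ?_
  rw [hsymm y x]
  rcases eq_or_ne (ω x y) 0 with hxy | hxy
  · simp [hxy]
  have hedge : (1 - 2 * α) ^ 2 * ((η x ^ 2 + η y ^ 2) * (u y ^ α - u x ^ α) ^ 2) ≤
      6 * α ^ 2 * (1 - 2 * α) *
          ((u y - u x) * (η x ^ 2 * u x ^ (2 * α - 1) - η y ^ 2 * u y ^ (2 * α - 1))) +
        14 * α ^ 2 * g * ((u x + u y) * (u x ^ (2 * α - 1) + u y ^ (2 * α - 1))) := by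
    refine (edge_energy_le hα (hu x) (hu y)).trans ?_
    have hx := hu x
    have hy := hu y
    gcongr
    exact hgrad x y hxy
  linear_combination mul_le_mul_of_nonneg_left hedge (hω x y)

theorem sq_mul_energySq_rpow_le (hnbr : ∀ x y, y ∈ nbr x ↔ G.Adj x y)
    (hsymm : ∀ x y, ω x y = ω y x) (hω : ∀ x y, 0 ≤ ω x y)
    (hzero : ∀ x y, ¬ G.Adj x y → ω x y = 0) (hsupp : ∀ x ∉ B, η x = 0)
    (hbdry : ∀ x ∈ intBdry G B, η x = 0) (hu : ∀ x, 0 < u x)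
    (hsuper : ∀ x ∈ B, lap nbr ω u x ≤ 0) (hα : α < 1 / 2) :
    (1 - 2 * α) ^ 2 * energySq ω η (fun x => u x ^ α) ≤
      14 * α ^ 2 * gradSup G η ^ 2 * ∑ x ∈ B, u x ^ (2 * α) * mu nbr ω x := by
  have hpow : ∀ x, 0 ≤ u x ^ (2 * α - 1) := fun x => Real.rpow_nonneg (hu x).le _
  have hout : ∀ x, η x ≠ 0 → ∀ y ∉ B, ω x y = 0 := fun x hx y hy =>
    weight_eq_zero_of_cutoff_ne_zero hzero hsupp hbdry hx hy
  have hzero' : ∀ x, ∀ y ∉ nbr x, ω x y = 0 := fun x y hy => hzero x y (mt (hnbr x y).2 hy)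
  have hgrad : ∀ x y, ω x y ≠ 0 → (η y - η x) ^ 2 ≤ gradSup G η ^ 2 := fun x y hxy => by
    rw [← sq_abs]
    gcongr
    exact abs_sub_le_gradSup (isBounded_range_of_eq_zero_off hsupp)
      (not_imp_comm.1 (hzero x y) hxy)
  have hedge := sum_sum_edge_energy_le (B := B) hsymm hω hgrad hu hα
  have htest := sum_sum_weight_mul_sub_nonpos (φ := fun x => η x ^ 2 * u x ^ (2 * α - 1)) hω
    hzero' (fun x => mul_nonneg (sq_nonneg _) (hpow x))
    (fun x hx => hout x (pow_ne_zero_iff two_ne_zero |>.1 (left_ne_zero_of_mul hx))) hsuper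
  have hmass := sum_sum_weight_mul_add_le hω hzero' hpow (fun x => (hu x).le) hsuper
  have hmul : ∀ x, u x ^ (2 * α - 1) * u x = u x ^ (2 * α) := fun x => by
    rw [← Real.rpow_add_one (hu x).ne', sub_add_cancel]
  simp only [hmul] at hmass
  rw [energySq_eq_sum hsupp hout]
  have hγ : 0 < 1 - 2 * α := by linarith
  linear_combination 1 / 2 * hedge + 3 * α ^ 2 * (1 - 2 * α) * htest +
    7 * α ^ 2 * gradSup G η ^ 2 * hmass

end Network

end RCM

open RCM in
theorem energy_estimate_superharmonic_general
    {V : Type*} {G : SimpleGraph V} {nbr : V → Finset V}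
    (hnbr : ∀ x y, y ∈ nbr x ↔ G.Adj x y) {ω : V → V → ℝ}
    (hsymm : ∀ x y, ω x y = ω y x) (hω : ∀ x y, 0 ≤ ω x y)
    (hzero : ∀ x y, ¬ G.Adj x y → ω x y = 0) {B : Finset V} {η : V → ℝ}
    (hηsupp : ∀ x ∉ B, η x = 0) (hηbdry : ∀ x ∈ intBdry G B, η x = 0)
    {u : V → ℝ} (hu : ∀ x, 0 < u x) (hsuper : ∀ x ∈ B, lap nbr ω u x ≤ 0)
    {α : ℝ} (hα : α < 1 / 2) :
    energySq ω η (fun x => u x ^ α) / (B.card : ℝ) ≤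
      14 * α ^ 2 / (1 - 2 * α) ^ 2 * gradSup G η ^ 2 *
        nrmW B 1 (mu nbr ω) (fun x => u x ^ (2 * α)) := by
  have hγ : 0 < (1 - 2 * α) ^ 2 := pow_pos (by linarith) 2
  have hnorm : nrmW B 1 (mu nbr ω) (fun x => u x ^ (2 * α)) =
      (B.card : ℝ)⁻¹ * ∑ x ∈ B, u x ^ (2 * α) * mu nbr ω x := by
    simp only [nrmW_one, abs_of_pos (Real.rpow_pos_of_pos (hu _) _)]
  have henergy := sq_mul_energySq_rpow_le hnbr hsymm hω hzero hηsupp hηbdry hu hsuper hα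
  rw [← le_div_iff₀' hγ] at henergy
  calc energySq ω η (fun x => u x ^ α) / (B.card : ℝ)
    _ ≤ 14 * α ^ 2 * gradSup G η ^ 2 * (∑ x ∈ B, u x ^ (2 * α) * mu nbr ω x) /
          (1 - 2 * α) ^ 2 / (B.card : ℝ) := by gcongr
    _ = 14 * α ^ 2 / (1 - 2 * α) ^ 2 * gradSup G η ^ 2 *
          nrmW B 1 (mu nbr ω) (fun x => u x ^ (2 * α)) := by rw [hnorm]; ring

open RCM in
/-- **Energy estimate for superharmonic functions** (Lemma 3.4). -/
theorem energy_estimate_superharmonic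
    {V : Type*} (G : SimpleGraph V) (nbr : V → Finset V)
    (hnbr : ∀ x y, y ∈ nbr x ↔ G.Adj x y)
    (ω : V → V → ℝ)
    (hsymm : ∀ x y, ω x y = ω y x)
    (hpos : ∀ x y, G.Adj x y → 0 < ω x y)
    (hzero : ∀ x y, ¬ G.Adj x y → ω x y = 0)
    (B : Finset V) (hBconn : (G.induce (B : Set V)).Connected)
    (η : V → ℝ)
    (hηsupp : ∀ x ∉ B, η x = 0)
    (hη01 : ∀ x, 0 ≤ η x ∧ η x ≤ 1)
    (hηbdry : ∀ x ∈ intBdry G B, η x = 0)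
    (K : ℝ) (hK : 1 ≤ K)
    (hosc : ∀ x y, G.Adj x y → η x ≠ 0 → η y ^ 2 ≤ K * η x ^ 2)
    (u : V → ℝ) (hu : ∀ x, 0 < u x)
    (hsuper : ∀ x ∈ B, lap nbr ω u x ≤ 0)
    (α : ℝ) (hα : α < 1 / 2) :
    energySq ω η (fun x => u x ^ α) / (B.card : ℝ) ≤
      32 * α ^ 2 / (1 - 2 * α) ^ 2 * K * gradSup G η ^ 2 *
        nrmW B 1 (mu nbr ω) (fun x => u x ^ (2 * α)) := by
  have hω : ∀ x y, 0 ≤ ω x y := fun x y =>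
    (em (G.Adj x y)).elim (fun h => (hpos x y h).le) fun h => (hzero x y h).ge
  have hnorm := nrmW_nonneg (B := B) (fun x _ => mu_nonneg (nbr := nbr) hω x) 1
    fun x => u x ^ (2 * α)
  have hconst : 14 * α ^ 2 / (1 - 2 * α) ^ 2 ≤ 32 * α ^ 2 / (1 - 2 * α) ^ 2 * K :=
    le_trans (by gcongr; norm_num) (le_mul_of_one_le_right (by positivity) hK)
  exact (energy_estimate_superharmonic_general hnbr hsymm hω hzero hηsupp hηbdry hu hsuper
    hα).trans (by gcongr)
end
end
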